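/- Let d ∈ {xd, cd}, let 𝒞1 and 𝒞2 be non-empty classes of frames closed under disjoint unions, and let L_i be a one-variable modal logic (in disjoint modal signatures) d-complete for 𝒞_i (i = 1,2). If L1 and L2 are both decidable, then the fusion L1 ⊗ L2 is decidable. -/

import Mathlib

namespace OneVarML

/-- One-variable first-order modal formulas over modal signature `M`:
atoms `P n` stand for `Pₙ(x)`, `ex φ` stands for `∃x φ`. -/
inductive OV (M : Type) : Type
  | atom : ℕ → OV M
  | neg  : OV M → OV M
  | and  : OV M → OV M → OV M
  | ex   : OV M → OV M
  | box  : M → OV M → OV M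
  deriving DecidableEq

namespace OV

variable {M M' : Type}

/-- implication, defined from `¬`, `∧` -/
def imp (φ ψ : OV M) : OV M := .neg (.and φ (.neg ψ))

/-- disjunction -/
def or (φ ψ : OV M) : OV M := .neg (.and (.neg φ) (.neg ψ))

/-- universal quantifier `∀x φ := ¬∃x¬φ` -/
def all (φ : OV M) : OV M := .neg (.ex (.neg φ))

/-- renaming of modal operators -/
def mapOp (f : M → M') : OV M → OV M'
  | atom n => atom n
  | neg φ => neg (mapOp f φ)
  | and φ ψ => and (mapOp f φ) (mapOp f ψ)
  | ex φ => ex (mapOp f φ)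
  | box m φ => box (f m) (mapOp f φ)

/-- uniform substitution of one-variable formulas for the atoms `Pₙ(x)` -/
def subst (σ : ℕ → OV M) : OV M → OV M
  | atom n => σ n
  | neg φ => neg (subst σ φ)
  | and φ ψ => and (subst σ φ) (subst σ ψ)
  | ex φ => ex (subst σ φ)
  | box m φ => box m (subst σ φ)

/-- formulas without modal operators -/
def boxFree : OV M → Prop
  | atom _ => True
  | neg φ => boxFree φ
  | and φ ψ => boxFree φ ∧ boxFree ψ
  | ex φ => boxFree φ
  | box _ _ => False

/-- classical evaluation of a (box-free) one-variable formula in a classical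
first-order structure with domain `D`, interpretation `I`, at element `a` -/
def clEval (D : Type) (I : ℕ → Set D) : OV M → D → Prop
  | atom n, a => a ∈ I n
  | neg φ, a => ¬ clEval D I φ a
  | and φ ψ, a => clEval D I φ a ∧ clEval D I ψ a
  | ex φ, _ => ∃ b : D, clEval D I φ b
  | box _ _, _ => True

end OV

/-- the one-variable fragment of classical first-order logic: box-free
formulas valid in all classical structures -/
def FOone (M : Type) : Set (OV M) :=
  {φ | φ.boxFree ∧ ∀ (D : Type) (I : ℕ → Set D) (a : D), OV.clEval D I φ a}

/-- A one-variable `M`-logic: includes one-variable classical FO and the K-axioms,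
closed under Modus Ponens, Generalisation, Necessitation and Substitution. -/
structure IsOVLogic {M : Type} (L : Set (OV M)) : Prop where
  fo : FOone M ⊆ L
  kax : ∀ (m : M) (n k : ℕ),
    OV.imp (.box m (OV.imp (.atom n) (.atom k)))
      (OV.imp (.box m (.atom n)) (.box m (.atom k))) ∈ L
  mp : ∀ φ ψ, OV.imp φ ψ ∈ L → φ ∈ L → ψ ∈ L
  gen : ∀ φ, φ ∈ L → OV.all φ ∈ L
  nec : ∀ m φ, φ ∈ L → OV.box m φ ∈ L
  subst : ∀ (σ : ℕ → OV M) φ, φ ∈ L → OV.subst σ φ ∈ L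

/-- A Kripke `M`-frame. -/
structure KFrame (M : Type) where
  W : Type
  ne : Nonempty W
  R : M → W → W → Prop

/-- the two domain semantics: expanding (`xd`) and constant (`cd`) domains -/
inductive DSem : Type
  | xd | cd
  deriving DecidableEq

/-- A Kripke model (with expanding domains) based on a frame `F`:
a family of classical structures over subsets of one big domain `D`,
expanding along all accessibility relations. -/
structure KModel {M : Type} (F : KFrame M) where
  D : Type
  dom : F.W → Set D
  domNe : ∀ w, (dom w).Nonempty
  expand : ∀ (m : M) (w v : F.W), F.R m w v → dom w ⊆ dom v
  I : F.W → ℕ → Set D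

namespace KModel

variable {M : Type} {F : KFrame M}

/-- a `d`-model: for `cd`, all the domains coincide (with the common domain) -/
def IsD (𝔪 : KModel F) (d : DSem) : Prop :=
  d = DSem.cd → ∀ w, 𝔪.dom w = Set.univ

/-- truth of a formula at a world under an assignment (value of `x`) -/
def eval (𝔪 : KModel F) : OV M → F.W → 𝔪.D → Prop
  | .atom n, w, a => a ∈ 𝔪.I w n
  | .neg φ, w, a => ¬ 𝔪.eval φ w a
  | .and φ ψ, w, a => 𝔪.eval φ w a ∧ 𝔪.eval ψ w a
  | .ex φ, w, _ => ∃ b ∈ 𝔪.dom w, 𝔪.eval φ w b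
  | .box m φ, w, a => ∀ v, F.R m w v → 𝔪.eval φ v a

/-- `φ` is true at `w` if it holds under every assignment into the domain of `w` -/
def TrueAt (𝔪 : KModel F) (φ : OV M) (w : F.W) : Prop :=
  ∀ a ∈ 𝔪.dom w, 𝔪.eval φ w a

/-- `φ` is true in the model if it is true at every world -/
def TrueIn (𝔪 : KModel F) (φ : OV M) : Prop := ∀ w, 𝔪.TrueAt φ w

/-- a finite model: finitely many worlds, all domains finite -/
def FiniteM (𝔪 : KModel F) : Prop := Finite F.W ∧ ∀ w, (𝔪.dom w).Finite

end KModel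

/-- `Log_d 𝒞`: the formulas true in every `d`-model based on a frame from `𝒞` -/
def LogD {M : Type} (d : DSem) (C : Set (KFrame M)) : Set (OV M) :=
  {φ | ∀ F ∈ C, ∀ 𝔪 : KModel F, 𝔪.IsD d → 𝔪.TrueIn φ}

/-- disjoint union of a family of frames -/
def KFrame.disjUnion {M ι : Type} (hι : Nonempty ι) (Fs : ι → KFrame M) : KFrame M where
  W := Σ i, (Fs i).W
  ne := ⟨⟨Classical.choice hι, Classical.choice (Fs (Classical.choice hι)).ne⟩⟩
  R := fun m a b => ∃ (i : ι) (w v : (Fs i).W), (Fs i).R m w v ∧ a = ⟨i, w⟩ ∧ b = ⟨i, v⟩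

/-- a class of frames closed under (arbitrary) disjoint unions -/
def ClosedDU {M : Type} (C : Set (KFrame M)) : Prop :=
  ∀ (ι : Type) (hι : Nonempty ι) (Fs : ι → KFrame M),
    (∀ i, Fs i ∈ C) → KFrame.disjUnion hι Fs ∈ C

/-- reduct of a frame along a map of modal signatures -/
def KFrame.reduct {M M' : Type} (f : M' → M) (F : KFrame M) : KFrame M' :=
  ⟨F.W, F.ne, fun m => F.R (f m)⟩

/-- fusion `𝒞1 ⊗ 𝒞2` of classes of frames: the frames over a common set of worlds
whose `M1`-reduct is in `𝒞1` and whose `M2`-reduct is in `𝒞2` -/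
def frameFusion {M1 M2 : Type} (C1 : Set (KFrame M1)) (C2 : Set (KFrame M2)) :
    Set (KFrame (M1 ⊕ M2)) :=
  {F | F.reduct Sum.inl ∈ C1 ∧ F.reduct Sum.inr ∈ C2}

/-- fusion `L1 ⊗ L2` of one-variable logics: the smallest one-variable
`(M1 ⊕ M2)`-logic containing (the copies of) `L1` and `L2` -/
def fusion {M1 M2 : Type} (L1 : Set (OV M1)) (L2 : Set (OV M2)) : Set (OV (M1 ⊕ M2)) :=
  ⋂₀ {L | IsOVLogic L ∧ OV.mapOp Sum.inl '' L1 ⊆ L ∧ OV.mapOp Sum.inr '' L2 ⊆ L}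

/-- local derivability from a logic: closure under Modus Ponens and Generalisation -/
inductive Deriv {M : Type} (L : Set (OV M)) : OV M → Prop
  | ax {φ} : φ ∈ L → Deriv L φ
  | mp {φ ψ} : Deriv L (OV.imp φ ψ) → Deriv L φ → Deriv L ψ
  | gen {φ} : Deriv L φ → Deriv L (OV.all φ)

/-- global consequence `φ ⊢*_L ψ`: `ψ` is in the smallest set including `L ∪ {φ}`
closed under Modus Ponens, Generalisation and Necessitation -/
inductive GlobalConseq {M : Type} (L : Set (OV M)) (φ : OV M) : OV M → Prop
  | ax {ψ} : ψ ∈ L → GlobalConseq L φ ψ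
  | prem : GlobalConseq L φ φ
  | mp {ψ χ} : GlobalConseq L φ (OV.imp ψ χ) → GlobalConseq L φ ψ → GlobalConseq L φ χ
  | gen {ψ} : GlobalConseq L φ ψ → GlobalConseq L φ (OV.all ψ)
  | nec (m : M) {ψ} : GlobalConseq L φ ψ → GlobalConseq L φ (OV.box m ψ)

/-- `L` is `d`-complete for `𝒞` -/
def DComplete {M : Type} (d : DSem) (L : Set (OV M)) (C : Set (KFrame M)) : Prop :=
  L = LogD d C

/-- `L` is globally `d`-complete for `𝒞` -/
def GloballyDComplete {M : Type} (d : DSem) (L : Set (OV M)) (C : Set (KFrame M)) : Prop :=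
  ∀ φ ψ, GlobalConseq L φ ψ ↔
    ∀ F ∈ C, ∀ 𝔪 : KModel F, 𝔪.IsD d → 𝔪.TrueIn φ → 𝔪.TrueIn ψ

/-- a non-trivial frame: some `R_□` relates two distinct worlds -/
def KFrame.Nontrivial {M : Type} (F : KFrame M) : Prop :=
  ∃ (m : M) (w v : F.W), w ≠ v ∧ F.R m w v

/-- the fixed Gödel numbering of one-variable formulas (relative to a numbering
`eM` of modal operators) -/
def OV.encode {M : Type} (eM : M → ℕ) : OV M → ℕ
  | .atom n => Nat.pair 0 n
  | .neg φ => Nat.pair 1 (OV.encode eM φ)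
  | .and φ ψ => Nat.pair 2 (Nat.pair (OV.encode eM φ) (OV.encode eM ψ))
  | .ex φ => Nat.pair 3 (OV.encode eM φ)
  | .box m φ => Nat.pair 4 (Nat.pair (eM m) (OV.encode eM φ))

/-- `L` is decidable: membership in `L` is computable w.r.t. the Gödel numbering -/
def DecidableLogic {M : Type} (eM : M → ℕ) (L : Set (OV M)) : Prop :=
  ComputablePred (fun n : ℕ => ∃ φ ∈ L, OV.encode eM φ = n)

/-- `L` is globally decidable: the global consequence relation is computable -/
def GloballyDecidable {M : Type} (eM : M → ℕ) (L : Set (OV M)) : Prop :=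
  ComputablePred (fun p : ℕ × ℕ =>
    ∃ φ ψ, GlobalConseq L φ ψ ∧ OV.encode eM φ = p.1 ∧ OV.encode eM ψ = p.2)

/-- the (local) finite `d`-model property -/
def FMP {M : Type} (d : DSem) (L : Set (OV M)) : Prop :=
  ∀ φ, φ ∉ L → ∃ (F : KFrame M) (𝔪 : KModel F), 𝔪.IsD d ∧ 𝔪.FiniteM ∧
    (∀ χ ∈ L, 𝔪.TrueIn χ) ∧ ∃ w, ¬ 𝔪.TrueAt φ w

/-- the global finite `d`-model property -/
def GlobalFMP {M : Type} (d : DSem) (L : Set (OV M)) : Prop :=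
  ∀ φ ψ, ¬ GlobalConseq L φ ψ →
    ∃ (F : KFrame M) (𝔪 : KModel F), 𝔪.IsD d ∧ 𝔪.FiniteM ∧
      (∀ χ ∈ L, 𝔪.TrueIn χ) ∧ 𝔪.TrueIn φ ∧ ∃ w, ¬ 𝔪.TrueAt ψ w

end OneVarML

namespace OneVarML

/-! ### Matching -/

theorem fib_equiv {X T K : Type} [Infinite K] (iX : X → K) (hX : Function.Injective iX)
    (t : X → T) (τ : T) (x0 : X) (h0 : t x0 = τ) :
    Nonempty ({x : X × K // t x.1 = τ} ≃ K) := by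
  rw [← Cardinal.eq]
  apply le_antisymm
  · have h1 : Cardinal.mk {x : X × K // t x.1 = τ} ≤ Cardinal.mk (K × K) :=
      Cardinal.mk_le_of_injective (f := fun x => (iX x.1.1, x.1.2)) (by
        rintro ⟨⟨a, b⟩, h⟩ ⟨⟨a', b'⟩, h'⟩ he
        simp only [Prod.mk.injEq] at he
        obtain ⟨h1, rfl⟩ := he
        obtain rfl := hX h1
        rfl)
    refine h1.trans (le_of_eq ?_)
    rw [Cardinal.mk_prod, Cardinal.lift_id]
    exact Cardinal.mul_eq_self (Cardinal.aleph0_le_mk K)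
  · exact Cardinal.mk_le_of_injective (f := fun k => (⟨(x0, k), h0⟩ : {x : X × K // t x.1 = τ}))
      (by intro a b h; simpa using h)

theorem match_tags {X Y T K : Type} [Infinite K] (iX : X → K) (hX : Function.Injective iX)
    (iY : Y → K) (hY : Function.Injective iY) (t1 : X → T) (t2 : Y → T)
    (h : Set.range t1 = Set.range t2) :
    ∃ e : X × K ≃ Y × K, ∀ x, t2 (e x).1 = t1 x.1 := by
  have key : ∀ τ, Nonempty ({x : X × K // t1 x.1 = τ} ≃ {y : Y × K // t2 y.1 = τ}) := by
    intro τ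
    by_cases hτ : τ ∈ Set.range t1
    · obtain ⟨x0, hx0⟩ := hτ
      have : τ ∈ Set.range t2 := h ▸ ⟨x0, hx0⟩
      obtain ⟨y0, hy0⟩ := this
      obtain ⟨a⟩ := fib_equiv iX hX t1 τ x0 hx0
      obtain ⟨b⟩ := fib_equiv iY hY t2 τ y0 hy0
      exact ⟨a.trans b.symm⟩
    · have h2 : τ ∉ Set.range t2 := h ▸ hτ
      have : IsEmpty {x : X × K // t1 x.1 = τ} := ⟨fun x => hτ ⟨x.1.1, x.2⟩⟩
      have : IsEmpty {y : Y × K // t2 y.1 = τ} := ⟨fun x => h2 ⟨x.1.1, x.2⟩⟩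
      exact ⟨Equiv.equivOfIsEmpty _ _⟩
  have E := fun τ => Classical.choice (key τ)
  refine ⟨(Equiv.sigmaFiberEquiv (fun x : X × K => t1 x.1)).symm.trans
    ((Equiv.sigmaCongrRight E).trans (Equiv.sigmaFiberEquiv (fun y : Y × K => t2 y.1))), ?_⟩
  intro x
  exact (E (t1 x.1) ⟨x, rfl⟩).2

/-! ### Soundness of the logic of a frame -/

/-- validity on a frame -/
def ValidOn {M : Type} (d : DSem) (F : KFrame M) (φ : OV M) : Prop :=
  ∀ 𝔪 : KModel F, 𝔪.IsD d → 𝔪.TrueIn φ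

section sound
variable {M : Type} {F : KFrame M}

theorem eval_imp (𝔪 : KModel F) (φ ψ : OV M) (w : F.W) (a : 𝔪.D) :
    𝔪.eval (OV.imp φ ψ) w a ↔ (𝔪.eval φ w a → 𝔪.eval ψ w a) := by
  simp [OV.imp, KModel.eval]

theorem eval_or (𝔪 : KModel F) (φ ψ : OV M) (w : F.W) (a : 𝔪.D) :
    𝔪.eval (OV.or φ ψ) w a ↔ (𝔪.eval φ w a ∨ 𝔪.eval ψ w a) := by
  simp only [OV.or, KModel.eval]; tauto

theorem eval_boxFree (𝔪 : KModel F) (w : F.W) (φ : OV M) (h : φ.boxFree)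
    (a : {a // a ∈ 𝔪.dom w}) :
    𝔪.eval φ w a.1 ↔
      OV.clEval {a // a ∈ 𝔪.dom w} (fun n => {a | a.1 ∈ 𝔪.I w n}) φ a := by
  induction φ generalizing a with
  | atom n => rfl
  | neg φ ih => simp only [KModel.eval, OV.clEval]; rw [ih h]
  | and φ ψ ih1 ih2 => simp only [KModel.eval, OV.clEval]; rw [ih1 h.1, ih2 h.2]
  | ex φ ih =>
    simp only [KModel.eval, OV.clEval]
    constructor
    · rintro ⟨b, hb, h1⟩; exact ⟨⟨b, hb⟩, (ih h ⟨b, hb⟩).1 h1⟩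
    · rintro ⟨b, h1⟩; exact ⟨b.1, b.2, (ih h b).2 h1⟩
  | box m φ ih => exact h.elim

/-- the model interpreting atoms by their substituents -/
def substModel (𝔪 : KModel F) (σ : ℕ → OV M) : KModel F :=
  ⟨𝔪.D, 𝔪.dom, 𝔪.domNe, 𝔪.expand, fun w n => {a | 𝔪.eval (σ n) w a}⟩

theorem eval_subst (𝔪 : KModel F) (σ : ℕ → OV M) (φ : OV M) (w : F.W) (a : 𝔪.D) :
    𝔪.eval (OV.subst σ φ) w a ↔
      (substModel 𝔪 σ).eval φ w a := by
  induction φ generalizing w a with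
  | atom n => rfl
  | neg φ ih => simp only [KModel.eval, OV.subst]; rw [ih]
  | and φ ψ ih1 ih2 => simp only [KModel.eval, OV.subst]; rw [ih1, ih2]
  | ex φ ih =>
    simp only [KModel.eval, OV.subst]
    exact exists_congr fun b => and_congr Iff.rfl (ih w b)
  | box m φ ih =>
    simp only [KModel.eval, OV.subst]
    exact forall_congr' fun b => imp_congr Iff.rfl (ih b a)

theorem validOn_logic (d : DSem) (F : KFrame M) : IsOVLogic {φ | ValidOn d F φ} where
  fo := by
    rintro φ ⟨h1, h2⟩ 𝔪 _ w a ha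
    exact (eval_boxFree 𝔪 w φ h1 ⟨a, ha⟩).2 (h2 _ _ _)
  kax := by
    intro m n k 𝔪 _ w a _
    simp only [eval_imp, KModel.eval]
    exact fun h1 h2 v hv => h1 v hv (h2 v hv)
  mp := by
    intro φ ψ h1 h2 𝔪 hd w a ha
    exact (eval_imp 𝔪 φ ψ w a).1 (h1 𝔪 hd w a ha) (h2 𝔪 hd w a ha)
  gen := by
    intro φ h 𝔪 hd w a _
    simp only [OV.all, KModel.eval]
    rintro ⟨b, hb, h1⟩
    exact h1 (h 𝔪 hd w b hb)
  nec := by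
    intro m φ h 𝔪 hd w a ha v hv
    exact h 𝔪 hd v a (𝔪.expand m w v hv ha)
  subst := by
    intro σ φ h 𝔪 hd w a ha
    exact (eval_subst 𝔪 σ φ w a).2 (h (substModel 𝔪 σ) hd w a ha)

end sound

theorem fusion_logic {M1 M2 : Type} (L1 : Set (OV M1)) (L2 : Set (OV M2)) :
    IsOVLogic (fusion L1 L2) where
  fo := fun φ h L hL => hL.1.fo h
  kax := fun m n k L hL => hL.1.kax m n k
  mp := fun φ ψ h1 h2 L hL => hL.1.mp φ ψ (h1 L hL) (h2 L hL)
  gen := fun φ h L hL => hL.1.gen φ (h L hL)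
  nec := fun m φ h L hL => hL.1.nec m φ (h L hL)
  subst := fun σ φ h L hL => hL.1.subst σ φ (h L hL)

/-- the reduct of a model -/
def redModel {M M' : Type} (f : M' → M) {F : KFrame M} (𝔪 : KModel F) : KModel (F.reduct f) :=
  ⟨𝔪.D, 𝔪.dom, 𝔪.domNe, fun m => 𝔪.expand (f m), 𝔪.I⟩

theorem eval_mapOp {M M' : Type} (f : M' → M) {F : KFrame M} (𝔪 : KModel F) (φ : OV M')
    (w : F.W) (a : 𝔪.D) :
    𝔪.eval (OV.mapOp f φ) w a ↔
      (redModel f 𝔪).eval φ w a := by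
  induction φ generalizing w a with
  | atom n => rfl
  | neg φ ih => simp only [KModel.eval, OV.mapOp]; rw [ih]
  | and φ ψ ih1 ih2 => simp only [KModel.eval, OV.mapOp]; rw [ih1, ih2]
  | ex φ ih =>
    simp only [KModel.eval, OV.mapOp]
    exact exists_congr fun b => and_congr Iff.rfl (ih w b)
  | box m φ ih =>
    simp only [KModel.eval, OV.mapOp]
    exact forall_congr' fun b => imp_congr Iff.rfl (ih b a)

theorem fusion_valid {M1 M2 : Type} (d : DSem) (L1 : Set (OV M1)) (L2 : Set (OV M2))
    (F : KFrame (M1 ⊕ M2)) (h1 : ∀ φ ∈ L1, ValidOn d (F.reduct Sum.inl) φ)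
    (h2 : ∀ φ ∈ L2, ValidOn d (F.reduct Sum.inr) φ) (φ : OV (M1 ⊕ M2))
    (hφ : φ ∈ fusion L1 L2) : ValidOn d F φ := by
  refine hφ {φ | ValidOn d F φ} ⟨validOn_logic d F, ?_, ?_⟩
  · rintro _ ⟨χ, hχ, rfl⟩ 𝔪 hd w a ha
    exact (eval_mapOp Sum.inl 𝔪 χ w a).2 (h1 χ hχ (redModel Sum.inl 𝔪) hd w a ha)
  · rintro _ ⟨χ, hχ, rfl⟩ 𝔪 hd w a ha
    exact (eval_mapOp Sum.inr 𝔪 χ w a).2 (h2 χ hχ (redModel Sum.inr 𝔪) hd w a ha)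

/-- a frame consisting of copies of a frame from a DU-closed class validates the logic -/
theorem copies_valid {M : Type} (d : DSem) (C : Set (KFrame M)) (hdu : ClosedDU C)
    (F : KFrame M) (hF : F ∈ C) (J : Type) [hJ : Nonempty J] (G : KFrame M)
    (e : G.W ≃ F.W × J)
    (he : ∀ m a b, G.R m a b ↔ F.R m (e a).1 (e b).1 ∧ (e a).2 = (e b).2)
    (φ : OV M) (hφ : φ ∈ LogD d C) : ValidOn d G φ := by
  intro 𝔪 hd w a ha
  let H := KFrame.disjUnion hJ (fun _ : J => F)
  have hH : H ∈ C := hdu J hJ _ (fun _ => hF)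
  let g : H.W → G.W := fun x => e.symm (x.2, x.1)
  let g' : G.W → H.W := fun x => ⟨(e x).2, (e x).1⟩
  have gg' : ∀ x, g (g' x) = x := fun x => by simp [g, g']
  have hR : ∀ m x y, H.R m x y ↔ G.R m (g x) (g y) := by
    rintro m ⟨j, x⟩ ⟨k, y⟩
    rw [he]
    simp only [H, KFrame.disjUnion, g, Equiv.apply_symm_apply]
    constructor
    · rintro ⟨i, w, v, h, h1, h2⟩
      cases h1; cases h2
      exact ⟨h, rfl⟩
    · rintro ⟨h, rfl⟩
      exact ⟨j, x, y, h, rfl, rfl⟩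
  let 𝔫 : KModel H := ⟨𝔪.D, fun x => 𝔪.dom (g x), fun x => 𝔪.domNe _,
    fun m x y h => 𝔪.expand m _ _ ((hR m x y).1 h), fun x => 𝔪.I (g x)⟩
  have key : ∀ (ψ : OV M) (x : H.W) (a : 𝔪.D), 𝔫.eval ψ x a ↔ 𝔪.eval ψ (g x) a := by
    intro ψ
    induction ψ with
    | atom n => intro x a; rfl
    | neg φ ih => intro x a; simp only [KModel.eval]; rw [ih]
    | and φ ψ ih1 ih2 => intro x a; simp only [KModel.eval]; rw [ih1, ih2]
    | ex φ ih =>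
      intro x a; simp only [KModel.eval]
      exact exists_congr fun b => and_congr Iff.rfl (ih x b)
    | box m φ ih =>
      intro x a; simp only [KModel.eval]
      constructor
      · intro h v hv
        have := h (g' v) ((hR m x _).2 (by rw [gg']; exact hv))
        rw [ih, gg'] at this
        exact this
      · intro h v hv
        exact (ih v a).2 (h _ ((hR m x v).1 hv))
  have := hφ H hH 𝔫 (fun h x => hd h (g x)) (g' w) a (by simp only [𝔫]; rw [gg']; exact ha)
  rw [key, gg'] at this
  exact this

end OneVarML

namespace OneVarML

/-- the type of a point, w.r.t. the first `l` formulas of the list `t` -/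
def tpOf {M : Type} {F : KFrame M} (𝔪 : KModel F) (t : ℕ → OV M) (l : ℕ) (w : F.W) (a : 𝔪.D) :
    Set ℕ := {c | c < l ∧ 𝔪.eval (t c) w a}

/-- the quasistate of a world -/
def qsOf {M : Type} {F : KFrame M} (𝔪 : KModel F) (t : ℕ → OV M) (l : ℕ) (w : F.W) :
    Set (Set ℕ) := {s | ∃ a ∈ 𝔪.dom w, s = tpOf 𝔪 t l w a}

/-- a model based on a frame of `C` with a level function -/
structure LComp {M : Type} (d : DSem) (C : Set (KFrame M)) where
  F : KFrame M
  mem : F ∈ C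
  𝔪 : KModel F
  isD : 𝔪.IsD d
  lev : F.W → ℕ
  hlev : ∀ m w v, F.R m w v → lev w ≤ lev v + 1

/-- the tag of a world -/
def LComp.tag {M : Type} {d : DSem} {C : Set (KFrame M)} (c : LComp d C) (t : ℕ → OV M)
    (w : c.F.W) : ℕ × Set (Set ℕ) := (c.lev w, qsOf c.𝔪 t (c.lev w) w)

theorem union_comp {M : Type} (d : DSem) (C : Set (KFrame M)) (hdu : ClosedDU C)
    (t : ℕ → OV M) (S : Set (ℕ × Set (Set ℕ))) (hS : S.Nonempty)
    (h : ∀ τ ∈ S, ∃ c : LComp d C, (∀ w, c.tag t w ∈ S) ∧ ∃ w, c.tag t w = τ) :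
    ∃ c : LComp d C, Set.range (c.tag t) = S ∧
      (d = DSem.xd → ∀ w, ∃ a, a ∉ c.𝔪.dom w) := by
  choose c hc1 hc2 using fun τ : S => h τ.1 τ.2
  have hι : Nonempty S := hS.to_subtype
  let H := KFrame.disjUnion hι (fun i => (c i).F)
  have hH : H ∈ C := hdu S hι _ (fun i => (c i).mem)
  let X := {b : Bool // d = DSem.cd → b = true}
  let D := (∀ i : S, (c i).𝔪.D) × X
  have hsurj : ∀ (i : S) (a : (c i).𝔪.D), ∃ f : ∀ i : S, (c i).𝔪.D, f i = a := by
    intro i a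
    classical
    let f0 : ∀ i : S, (c i).𝔪.D := fun i =>
      ((c i).𝔪.domNe (Classical.choice (c i).F.ne)).some
    exact ⟨Function.update f0 i a, by simp⟩
  let 𝔫 : KModel H :=
    { D := D
      dom := fun x => {a | a.1 x.1 ∈ (c x.1).𝔪.dom x.2 ∧ a.2.1 = true}
      domNe := by
        rintro ⟨i, x⟩
        obtain ⟨a, ha⟩ := (c i).𝔪.domNe x
        obtain ⟨f, hf⟩ := hsurj i a
        exact ⟨(f, ⟨true, fun _ => rfl⟩), by simpa [hf] using ha⟩
      expand := by
        rintro m x y ⟨i, w, v, hR, rfl, rfl⟩ a ⟨ha, hb⟩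
        exact ⟨(c i).𝔪.expand m w v hR ha, hb⟩
      I := fun x n => {a | a.1 x.1 ∈ (c x.1).𝔪.I x.2 n} }
  have key : ∀ (ψ : OV M) (i : S) (x : (c i).F.W) (a : D),
      𝔫.eval ψ ⟨i, x⟩ a ↔ (c i).𝔪.eval ψ x (a.1 i) := by
    intro ψ
    induction ψ with
    | atom n => intro i x a; rfl
    | neg φ ih => intro i x a; simp only [KModel.eval]; rw [ih]
    | and φ ψ ih1 ih2 => intro i x a; simp only [KModel.eval]; rw [ih1, ih2]
    | ex φ ih =>
      intro i x a; simp only [KModel.eval]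
      constructor
      · rintro ⟨b, ⟨hb, _⟩, h⟩
        exact ⟨b.1 i, hb, (ih i x b).1 h⟩
      · rintro ⟨b, hb, h⟩
        obtain ⟨f, rfl⟩ := hsurj i b
        exact ⟨(f, ⟨true, fun _ => rfl⟩), ⟨hb, rfl⟩, (ih i x _).2 h⟩
    | box m φ ih =>
      intro i x a; simp only [KModel.eval]
      constructor
      · intro h v hv
        exact (ih i v a).1 (h ⟨i, v⟩ ⟨i, x, v, hv, rfl, rfl⟩)
      · rintro h v ⟨j, w, v', hR, h1, rfl⟩
        cases h1
        exact (ih _ v' a).2 (h v' hR)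
  let cc : LComp d C :=
    { F := H
      mem := hH
      𝔪 := 𝔫
      isD := by
        rintro hd ⟨i, x⟩
        ext a
        simp only [𝔫, Set.mem_ofPred_eq, Set.mem_univ, iff_true]
        exact ⟨by rw [(c i).isD hd x]; trivial, a.2.2 hd⟩
      lev := fun x => (c x.1).lev x.2
      hlev := by
        rintro m x y ⟨i, w, v, hR, rfl, rfl⟩
        exact (c i).hlev m w v hR }
  have htag : ∀ (i : S) (x : (c i).F.W), cc.tag t ⟨i, x⟩ = (c i).tag t x := by
    intro i x
    have htp : ∀ a : D, tpOf 𝔫 t ((c i).lev x) ⟨i, x⟩ a = tpOf (c i).𝔪 t ((c i).lev x) x (a.1 i) := by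
      intro a
      ext n
      exact and_congr Iff.rfl (key _ i x a)
    refine Prod.ext rfl ?_
    ext s
    constructor
    · rintro ⟨a, ha, rfl⟩
      exact ⟨a.1 i, ha.1, htp a⟩
    · rintro ⟨b, hb, rfl⟩
      obtain ⟨f, rfl⟩ := hsurj i b
      exact ⟨(f, ⟨true, fun _ => rfl⟩), ⟨hb, rfl⟩, (htp (f, ⟨true, fun _ => rfl⟩)).symm⟩
  refine ⟨cc, ?_, ?_⟩
  · ext τ
    constructor
    · rintro ⟨⟨i, x⟩, rfl⟩
      rw [htag]
      exact hc1 i x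
    · intro hτ
      obtain ⟨w, hw⟩ := hc2 ⟨τ, hτ⟩
      exact ⟨⟨⟨τ, hτ⟩, w⟩, (htag _ _).trans hw⟩
  · rintro rfl ⟨i, x⟩
    obtain ⟨a, ha⟩ := (c i).𝔪.domNe x
    obtain ⟨f, hf⟩ := hsurj i a
    refine ⟨(f, ⟨false, fun h => by cases h⟩), ?_⟩
    rintro ⟨_, h⟩
    cases h

/-- surrogate translation to the first language -/
def tr1 {M1 M2 : Type} (E : OV (M1 ⊕ M2) → ℕ) : OV (M1 ⊕ M2) → OV M1
  | .atom n => .atom (E (.atom n))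
  | .neg φ => .neg (tr1 E φ)
  | .and φ ψ => .and (tr1 E φ) (tr1 E ψ)
  | .ex φ => .ex (tr1 E φ)
  | .box (Sum.inl m) φ => .box m (tr1 E φ)
  | .box (Sum.inr m) φ => .atom (E (.box (Sum.inr m) φ))

/-- surrogate translation to the second language -/
def tr2 {M1 M2 : Type} (E : OV (M1 ⊕ M2) → ℕ) : OV (M1 ⊕ M2) → OV M2
  | .atom n => .atom (E (.atom n))
  | .neg φ => .neg (tr2 E φ)
  | .and φ ψ => .and (tr2 E φ) (tr2 E ψ)
  | .ex φ => .ex (tr2 E φ)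
  | .box (Sum.inl m) φ => .atom (E (.box (Sum.inl m) φ))
  | .box (Sum.inr m) φ => .box m (tr2 E φ)

theorem lt_pair {k x : ℕ} (hk : 1 ≤ k) : x < Nat.pair k x := by
  unfold Nat.pair; split_ifs <;> nlinarith

theorem le_pair2 {k x : ℕ} : x ≤ Nat.pair k x := Nat.right_le_pair k x

theorem range_et {M1 M2 : Type} {F1 : KFrame M1} {F2 : KFrame M2} (d : DSem)
    (𝔪1 : KModel F1) (𝔪2 : KModel F2) (h1 : 𝔪1.IsD d) (h2 : 𝔪2.IsD d)
    (o1 : d = DSem.xd → ∀ w, ∃ a, a ∉ 𝔪1.dom w)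
    (o2 : d = DSem.xd → ∀ w, ∃ a, a ∉ 𝔪2.dom w) (T1 : ℕ → OV M1) (T2 : ℕ → OV M2) (l : ℕ)
    (w1 : F1.W) (w2 : F2.W) (hq : qsOf 𝔪1 T1 l w1 = qsOf 𝔪2 T2 l w2) :
    Set.range (fun a => (a ∈ 𝔪1.dom w1, {c | a ∈ 𝔪1.dom w1 ∧ c ∈ tpOf 𝔪1 T1 l w1 a})) =
    Set.range (fun a => (a ∈ 𝔪2.dom w2, {c | a ∈ 𝔪2.dom w2 ∧ c ∈ tpOf 𝔪2 T2 l w2 a})) := by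
  have aux : ∀ {M1 M2 : Type} {F1 : KFrame M1} {F2 : KFrame M2}
    (𝔪1 : KModel F1) (𝔪2 : KModel F2) (h1 : 𝔪1.IsD d)
    (o2 : d = DSem.xd → ∀ w, ∃ a, a ∉ 𝔪2.dom w) (T1 : ℕ → OV M1) (T2 : ℕ → OV M2) 
    (w1 : F1.W) (w2 : F2.W) (hq : qsOf 𝔪1 T1 l w1 = qsOf 𝔪2 T2 l w2),
    Set.range (fun a => (a ∈ 𝔪1.dom w1, {c | a ∈ 𝔪1.dom w1 ∧ c ∈ tpOf 𝔪1 T1 l w1 a})) ⊆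
    Set.range (fun a => (a ∈ 𝔪2.dom w2, {c | a ∈ 𝔪2.dom w2 ∧ c ∈ tpOf 𝔪2 T2 l w2 a})) := by
    rintro M1 M2 F1 F2 𝔪1 𝔪2 h1 o2 T1 T2 w1 w2 hq _ ⟨a, rfl⟩
    by_cases ha : a ∈ 𝔪1.dom w1
    · have : tpOf 𝔪1 T1 l w1 a ∈ qsOf 𝔪2 T2 l w2 := hq ▸ ⟨a, ha, rfl⟩
      obtain ⟨b, hb, hab⟩ := this
      exact ⟨b, by simp [ha, hb, hab]⟩
    · have hd : d = DSem.xd := by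
        cases d with
        | xd => rfl
        | cd => exact absurd (by rw [h1 rfl w1]; trivial) ha
      obtain ⟨b, hb⟩ := o2 hd w2
      exact ⟨b, by simp [ha, hb]⟩
  exact Set.Subset.antisymm (aux 𝔪1 𝔪2 h1 o2 T1 T2 w1 w2 hq) (aux 𝔪2 𝔪1 h2 o1 T2 T1 w2 w1 hq.symm)

theorem fuse {M1 M2 : Type} (d : DSem) (C1 : Set (KFrame M1)) (C2 : Set (KFrame M2))
    (hdu1 : ClosedDU C1) (hdu2 : ClosedDU C2) (e : M1 ⊕ M2 → ℕ)
    (T1 : ℕ → OV M1) (T2 : ℕ → OV M2)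
    (hT1 : ∀ ψ, T1 (OV.encode e ψ) = tr1 (OV.encode e) ψ)
    (hT2 : ∀ ψ, T2 (OV.encode e ψ) = tr2 (OV.encode e) ψ)
    (c1 : LComp d C1) (c2 : LComp d C2) (hr : Set.range (c1.tag T1) = Set.range (c2.tag T2))
    (o1 : d = DSem.xd → ∀ w, ∃ a, a ∉ c1.𝔪.dom w)
    (o2 : d = DSem.xd → ∀ w, ∃ a, a ∉ c2.𝔪.dom w) :
    ∃ F : KFrame (M1 ⊕ M2), (∀ φ ∈ LogD d C1, ValidOn d (F.reduct Sum.inl) φ) ∧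
      (∀ φ ∈ LogD d C2, ValidOn d (F.reduct Sum.inr) φ) ∧
      ∀ w ψ, OV.encode e ψ < c1.lev w → ¬ c1.𝔪.TrueAt (tr1 (OV.encode e) ψ) w →
        ¬ ValidOn d F ψ := by
  let W1 := c1.F.W
  let W2 := c2.F.W
  let D1 := c1.𝔪.D
  let D2 := c2.𝔪.D
  let K := ℕ ⊕ (W1 ⊕ W2) ⊕ (D1 ⊕ D2)
  have iW1 : Function.Injective (fun x : W1 => (Sum.inr (Sum.inl (Sum.inl x)) : K)) := by
    intro x y h; simpa using h
  have iW2 : Function.Injective (fun x : W2 => (Sum.inr (Sum.inl (Sum.inr x)) : K)) := by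
    intro x y h; simpa using h
  have iD1 : Function.Injective (fun x : D1 => (Sum.inr (Sum.inr (Sum.inl x)) : K)) := by
    intro x y h; simpa using h
  have iD2 : Function.Injective (fun x : D2 => (Sum.inr (Sum.inr (Sum.inr x)) : K)) := by
    intro x y h; simpa using h
  obtain ⟨f0, hf0⟩ := match_tags (K := K) _ iW1 _ iW2 (c1.tag T1) (c2.tag T2) hr
  have hg : ∀ x : W1 × K, ∃ g : D1 × K ≃ D2 × K, ∀ a,
      ((g a).1 ∈ c2.𝔪.dom (f0 x).1 ↔ a.1 ∈ c1.𝔪.dom x.1) ∧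
      (a.1 ∈ c1.𝔪.dom x.1 → ∀ c, c < c1.lev x.1 →
        (c2.𝔪.eval (T2 c) (f0 x).1 (g a).1 ↔ c1.𝔪.eval (T1 c) x.1 a.1)) := by
    intro x
    have h1 := hf0 x
    have hl : c2.lev (f0 x).1 = c1.lev x.1 := congrArg Prod.fst h1
    have hq : qsOf c1.𝔪 T1 (c1.lev x.1) x.1 = qsOf c2.𝔪 T2 (c1.lev x.1) (f0 x).1 := by
      have := congrArg Prod.snd h1
      simp only [LComp.tag] at this
      rw [hl] at this
      exact this.symm
    obtain ⟨g, hg⟩ := match_tags (K := K) _ iD1 _ iD2 _ _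
      (range_et d c1.𝔪 c2.𝔪 c1.isD c2.isD o1 o2 T1 T2 _ _ _ hq)
    refine ⟨g, fun a => ?_⟩
    have h2 := hg a
    simp only [Prod.mk.injEq] at h2
    have h3 := iff_of_eq h2.1
    refine ⟨h3, fun ha c hc => ?_⟩
    have h4 := Set.ext_iff.1 h2.2 c
    simp only [Set.mem_ofPred_eq, tpOf, h3, ha, hc, true_and] at h4
    exact h4
  choose g hg using hg
  let D := D1 × K
  let J1 := D ≃ D1 × K
  let J2 := D ≃ D2 × K
  let V := (W1 × K) × J1
  let f : V ≃ (W2 × K) × J2 :=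
    Equiv.prodShear f0 (fun x => Equiv.equivCongr (Equiv.refl D) (g x))
  have hf1 : ∀ p : V, (f p).1 = f0 p.1 := fun p => rfl
  have hf2 : ∀ (p : V) (a : D), (f p).2 a = g p.1 (p.2 a) := fun p a => rfl
  have w0 : W1 := Classical.choice c1.F.ne
  have hK : Nonempty K := ⟨Sum.inl 0⟩
  have hJ1 : Nonempty J1 := ⟨Equiv.refl _⟩
  have hJ2 : Nonempty J2 := ⟨g (w0, Sum.inl 0)⟩
  let F : KFrame (M1 ⊕ M2) :=
    { W := V
      ne := ⟨((w0, Sum.inl 0), Equiv.refl _)⟩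
      R := fun m p q => match m with
        | Sum.inl m => c1.F.R m p.1.1 q.1.1 ∧ (p.1.2, p.2) = (q.1.2, q.2)
        | Sum.inr m => c2.F.R m (f p).1.1 (f q).1.1 ∧ ((f p).1.2, (f p).2) = ((f q).1.2, (f q).2) }
  have hdom : ∀ (p : V) (a : D),
      (p.2 a).1 ∈ c1.𝔪.dom p.1.1 ↔ ((f p).2 a).1 ∈ c2.𝔪.dom (f p).1.1 := by
    intro p a
    rw [hf2, hf1]
    exact ((hg p.1 (p.2 a)).1).symm
  have hev : ∀ (p : V) (a : D), (p.2 a).1 ∈ c1.𝔪.dom p.1.1 → ∀ c, c < c1.lev p.1.1 →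
      (c2.𝔪.eval (T2 c) (f p).1.1 ((f p).2 a).1 ↔ c1.𝔪.eval (T1 c) p.1.1 (p.2 a).1) := by
    intro p a
    rw [hf2, hf1]
    exact (hg p.1 (p.2 a)).2
  have hlv : ∀ p : V, c2.lev (f p).1.1 = c1.lev p.1.1 := fun p => congrArg Prod.fst (hf0 p.1)
  have hsymm : ∀ (p : V) (x : D1 × K), p.2 (p.2.symm x) = x :=
    fun p x => Equiv.apply_symm_apply p.2 x
  let 𝔫 : KModel F :=
    { D := D
      dom := fun p => {a | (p.2 a).1 ∈ c1.𝔪.dom p.1.1}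
      domNe := by
        intro p
        obtain ⟨a, ha⟩ := c1.𝔪.domNe p.1.1
        exact ⟨p.2.symm (a, Sum.inl 0), by
          show (p.2 (p.2.symm (a, Sum.inl 0))).1 ∈ c1.𝔪.dom p.1.1
          rw [hsymm]; exact ha⟩
      expand := by
        rintro (m | m) p q ⟨hR, h2⟩ a ha
        · simp only [Prod.mk.injEq] at h2
          have := c1.𝔪.expand m _ _ hR ha
          rw [h2.2] at this
          exact this
        · simp only [Prod.mk.injEq] at h2
          have := c2.𝔪.expand m _ _ hR ((hdom p a).1 ha)
          rw [h2.2] at this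
          exact (hdom q a).2 this
      I := fun p n => {a | c1.𝔪.eval (tr1 (OV.encode e) (.atom n)) p.1.1 (p.2 a).1} }
  have key : ∀ (ψ : OV (M1 ⊕ M2)) (p : V) (a : D), (p.2 a).1 ∈ c1.𝔪.dom p.1.1 →
      OV.encode e ψ < c1.lev p.1.1 →
      (𝔫.eval ψ p a ↔ c1.𝔪.eval (tr1 (OV.encode e) ψ) p.1.1 (p.2 a).1) := by
    intro ψ
    induction ψ with
    | atom n => intro p a _ _; rfl
    | neg φ ih =>
      intro p a ha hl
      simp only [KModel.eval, tr1]
      rw [ih p a ha ((lt_pair le_rfl).trans hl)]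
    | and φ ψ ih1 ih2 =>
      intro p a ha hl
      simp only [KModel.eval, tr1]
      have h0 := (lt_pair (by norm_num : 1 ≤ 2)).trans hl
      rw [ih1 p a ha ((Nat.left_le_pair _ _).trans_lt h0),
        ih2 p a ha ((Nat.right_le_pair _ _).trans_lt h0)]
    | ex φ ih =>
      intro p a ha hl
      simp only [KModel.eval, tr1]
      have h0 := (lt_pair (by norm_num : 1 ≤ 3)).trans hl
      constructor
      · rintro ⟨b, hb, h⟩
        exact ⟨_, hb, (ih p b hb h0).1 h⟩
      · rintro ⟨b, hb, h⟩
        have hb' : (p.2 (p.2.symm (b, Sum.inl 0))).1 = b := by rw [hsymm]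
        exact ⟨p.2.symm (b, Sum.inl 0), by
          show (p.2 (p.2.symm (b, Sum.inl 0))).1 ∈ c1.𝔪.dom p.1.1
          rw [hb']; exact hb,
          (ih p _ (by rw [hb']; exact hb) h0).2 (by rw [hb']; exact h)⟩
    | box m φ ih =>
      intro p a ha hl
      have h0 : OV.encode e φ < OV.encode e (.box m φ) :=
        (Nat.right_le_pair _ _).trans_lt (lt_pair (by norm_num : 1 ≤ 4))
      rcases m with m | m
      · simp only [KModel.eval, tr1]
        constructor
        · intro h v hv
          have hlv := c1.hlev m _ _ hv
          have h1 := h ((v, p.1.2), p.2) ⟨hv, rfl⟩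
          exact (ih ((v, p.1.2), p.2) a (c1.𝔪.expand m _ _ hv ha) (by dsimp only; omega)).1 h1
        · rintro h q ⟨hv, h2⟩
          simp only [Prod.mk.injEq] at h2
          have hlv := c1.hlev m _ _ hv
          have h1 := h _ hv
          rw [h2.2] at h1
          have ha' := c1.𝔪.expand m _ _ hv ha
          rw [h2.2] at ha'
          exact (ih q a ha' (by omega)).2 h1
      · rw [← hT1, ← hev p a ha _ hl, hT2]
        simp only [KModel.eval, tr2]
        have step : ∀ q : V, c2.F.R m (f p).1.1 (f q).1.1 → (f p).2 = (f q).2 →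
            (𝔫.eval φ q a ↔
              c2.𝔪.eval (tr2 (OV.encode e) φ) (f q).1.1 ((f p).2 a).1) := by
          intro q hR hpq
          have ha' : (q.2 a).1 ∈ c1.𝔪.dom q.1.1 := by
            rw [hdom, ← hpq]
            exact c2.𝔪.expand m _ _ hR ((hdom p a).1 ha)
          have hl2 := c2.hlev m _ _ hR
          rw [hlv, hlv] at hl2
          have hl3 : OV.encode e φ < c1.lev q.1.1 := by omega
          rw [ih q a ha' hl3, ← hT1, ← hev q a ha' _ hl3, hT2, hpq]
        constructor
        · intro h v hv
          let q := f.symm ((v, (f p).1.2), (f p).2)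
          have hq : f q = ((v, (f p).1.2), (f p).2) := f.apply_symm_apply _
          have h1 : c2.F.R m (f p).1.1 (f q).1.1 := by rw [hq]; exact hv
          have h2 : (f p).2 = (f q).2 := by rw [hq]
          have h3 := (step q h1 h2).1 (h q ⟨h1, by rw [hq]⟩)
          rw [hq] at h3
          exact h3
        · rintro h q ⟨hv, h2⟩
          simp only [Prod.mk.injEq] at h2
          exact (step q hv h2.2).2 (h _ hv)
  refine ⟨F, ?_, ?_, ?_⟩
  · exact fun φ hφ => copies_valid d C1 hdu1 c1.F c1.mem (K × J1) (F.reduct Sum.inl)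
      (Equiv.prodAssoc _ _ _) (fun m a b => Iff.rfl) φ hφ
  · exact fun φ hφ => copies_valid d C2 hdu2 c2.F c2.mem (K × J2) (F.reduct Sum.inr)
      (f.trans (Equiv.prodAssoc _ _ _)) (fun m a b => Iff.rfl) φ hφ
  · intro w ψ hψ hn hv
    apply hn
    intro a ha
    have hd : 𝔫.IsD d := by
      intro hd p
      ext a
      simp only [𝔫, Set.mem_ofPred_eq, Set.mem_univ, iff_true]
      rw [c1.isD hd]; trivial
    let p : V := ((w, Sum.inl 0), Equiv.refl _)
    exact (key ψ p (a, Sum.inl 0) ha hψ).1 (hv 𝔫 hd p (a, Sum.inl 0) ha)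

end OneVarML

namespace OneVarML

theorem encode_inj {M : Type} (e : M → ℕ) (he : Function.Injective e) :
    Function.Injective (OV.encode e) := by
  intro φ
  induction φ with
  | atom n => intro ψ h; cases ψ <;> simp [OV.encode, Nat.pair_eq_pair] at h ⊢; exact h
  | neg φ ih => intro ψ h; cases ψ <;> simp [OV.encode, Nat.pair_eq_pair] at h ⊢; exact ih h
  | and φ ψ ih1 ih2 =>
    intro ψ h; cases ψ <;> simp [OV.encode, Nat.pair_eq_pair] at h ⊢
    exact ⟨ih1 h.1, ih2 h.2⟩
  | ex φ ih => intro ψ h; cases ψ <;> simp [OV.encode, Nat.pair_eq_pair] at h ⊢; exact ih h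
  | box m φ ih =>
    intro ψ h; cases ψ <;> simp [OV.encode, Nat.pair_eq_pair] at h ⊢
    exact ⟨he h.1, ih h.2⟩

/-- partial decoding -/
noncomputable def decO {M : Type} (e : M → ℕ) : ℕ → Option (OV M) :=
  Function.partialInv (OV.encode e)

theorem decO_iff {M : Type} {e : M → ℕ} (he : Function.Injective e) (n : ℕ) (φ : OV M) :
    decO e n = some φ ↔ OV.encode e φ = n :=
  Function.Injective.isPartialInv (encode_inj e he) φ n

/-- total decoding -/
noncomputable def dec {M : Type} (e : M → ℕ) (n : ℕ) : OV M := (decO e n).getD (.atom 0)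

theorem dec_encode {M : Type} {e : M → ℕ} (he : Function.Injective e) (φ : OV M) :
    dec e (OV.encode e φ) = φ := by
  unfold dec; rw [(decO_iff he _ φ).2 rfl]; rfl

/-- Boolean valuations of formulas -/
structure IsVal {M : Type} (v : OV M → Prop) : Prop where
  neg : ∀ φ, v (.neg φ) ↔ ¬ v φ
  and : ∀ φ ψ, v (.and φ ψ) ↔ v φ ∧ v ψ

theorem IsVal.imp {M : Type} {v : OV M → Prop} (h : IsVal v) (φ ψ) :
    v (OV.imp φ ψ) ↔ (v φ → v ψ) := by
  simp only [OV.imp, h.neg, h.and]; tauto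

theorem IsVal.or {M : Type} {v : OV M → Prop} (h : IsVal v) (φ ψ) :
    v (OV.or φ ψ) ↔ (v φ ∨ v ψ) := by
  simp only [OV.or, h.neg, h.and]; tauto

/-- propositional abstraction -/
def absF {M : Type} (E : OV M → ℕ) : OV M → OV M
  | .atom n => .atom (E (.atom n))
  | .neg φ => .neg (absF E φ)
  | .and φ ψ => .and (absF E φ) (absF E ψ)
  | .ex φ => .atom (E (.ex φ))
  | .box m φ => .atom (E (.box m φ))

theorem taut {M : Type} {e : M → ℕ} (he : Function.Injective e) {L : Set (OV M)}
    (hL : IsOVLogic L) (ψ : OV M) (h : ∀ v, IsVal v → v ψ) : ψ ∈ L := by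
  have h1 : ∀ χ : OV M, OV.subst (dec e) (absF (OV.encode e) χ) = χ := by
    intro χ
    induction χ with
    | neg φ ih => simp only [absF, OV.subst, ih]
    | and φ ψ ih1 ih2 => simp only [absF, OV.subst, ih1, ih2]
    | _ => simp only [absF, OV.subst, dec_encode he]
  have h2 : ∀ χ : OV M, (absF (OV.encode e) χ).boxFree := by
    intro χ
    induction χ with
    | neg φ ih => exact ih
    | and φ ψ ih1 ih2 => exact ⟨ih1, ih2⟩
    | _ => trivial
  rw [← h1 ψ]
  apply hL.subst
  apply hL.fo
  refine ⟨h2 ψ, fun D I a => ?_⟩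
  exact h (fun χ => OV.clEval D I (absF (OV.encode e) χ) a) ⟨fun _ => Iff.rfl, fun _ _ => Iff.rfl⟩

theorem taut2 {M : Type} {e : M → ℕ} (he : Function.Injective e) {L : Set (OV M)}
    (hL : IsOVLogic L) {a b : OV M} (ha : a ∈ L) (hb : b ∈ L) (ψ : OV M)
    (h : ∀ v, IsVal v → v a → v b → v ψ) : ψ ∈ L := by
  refine hL.mp _ _ (hL.mp _ _ (taut he hL (OV.imp a (OV.imp b ψ)) ?_) ha) hb
  intro v hv
  rw [hv.imp, hv.imp]
  exact h v hv

/-- a verum constant -/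
def top (M : Type) : OV M := .neg (.and (.atom 0) (.neg (.atom 0)))

theorem IsVal.top {M : Type} {v : OV M → Prop} (h : IsVal v) : v (top M) := by
  simp only [OneVarML.top, h.neg, h.and]; tauto

/-- conjunction of boxes -/
def bxl {M : Type} : List M → OV M → OV M
  | [], _ => top M
  | m :: ms, θ => .and (.box m θ) (bxl ms θ)

/-- state descriptions -/
def dsc {α : Type} (ng : α → α) (an : α → α → α) (tp : α) : List α → List α
  | [] => [tp]
  | f :: A => (dsc ng an tp A).map (an f) ++ (dsc ng an tp A).map (an (ng f))

/-- the operations used by the decision procedure -/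
structure Alg (α : Type) where
  ng : α → α
  an : α → α → α
  ex : α → α
  bx : α → α
  tp : α
  T : ℕ → α
  ok : α → Bool

namespace Alg
variable {α β : Type} (A : Alg α) (B : Alg β)

/-- descriptions of quasistates -/
def Q (l : ℕ) : List α :=
  dsc A.ng A.an A.tp ((dsc A.ng A.an A.tp ((List.range l).map A.T)).map A.ex)

/-- disjunction of the passing descriptions -/
def sig (θ : α) (l : List α) : α :=
  l.foldr (fun p acc => if A.ok (A.an p (A.bx θ)) then A.ng (A.an (A.ng p) (A.ng acc)) else acc)
    (A.ng A.tp)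

/-- the formulas `Theta` -/
def Th : ℕ → α
  | 0 => A.tp
  | l + 1 => A.an (A.sig (Th l) (A.Q (l + 1))) (A.bx (Th l))

/-- homomorphisms -/
structure Hom (h : α → β) : Prop where
  ng : ∀ x, h (A.ng x) = B.ng (h x)
  an : ∀ x y, h (A.an x y) = B.an (h x) (h y)
  ex : ∀ x, h (A.ex x) = B.ex (h x)
  bx : ∀ x, h (A.bx x) = B.bx (h x)
  tp : h A.tp = B.tp
  T : ∀ n, h (A.T n) = B.T n
  ok : ∀ x, A.ok x = B.ok (h x)

variable {A B}

theorem dsc_hom {h : α → β} (H : Hom A B h) (l : List α) :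
    (dsc A.ng A.an A.tp l).map h = dsc B.ng B.an B.tp (l.map h) := by
  induction l with
  | nil => simp [dsc, H.tp]
  | cons f l ih =>
    simp only [dsc, List.map_cons, List.map_append, ← ih, List.map_map]
    congr 1
    · apply List.map_congr_left; intro x _; simp [H.an]
    · apply List.map_congr_left; intro x _; simp [H.an, H.ng]

theorem Q_hom {h : α → β} (H : Hom A B h) (l : ℕ) : (A.Q l).map h = B.Q l := by
  unfold Q
  rw [dsc_hom H, List.map_map]
  have : h ∘ A.ex = B.ex ∘ h := funext H.ex
  rw [this, ← List.map_map, dsc_hom H, List.map_map]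
  have : h ∘ A.T = B.T := funext H.T
  rw [this]

theorem Th_hom {h : α → β} (H : Hom A B h) (l : ℕ) : h (A.Th l) = B.Th l := by
  induction l with
  | zero => exact H.tp
  | succ l ih =>
    simp only [Th]
    rw [H.an, H.bx, ih, ← Q_hom H]
    congr 1
    generalize A.Q (l + 1) = q
    induction q with
    | nil => simp [sig, H.ng, H.tp]
    | cons p q ihq =>
      have e1 : A.sig (A.Th l) (p :: q) = if A.ok (A.an p (A.bx (A.Th l))) then
        A.ng (A.an (A.ng p) (A.ng (A.sig (A.Th l) q))) else A.sig (A.Th l) q := rfl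
      have e2 : B.sig (B.Th l) ((p :: q).map h) = if B.ok (B.an (h p) (B.bx (B.Th l))) then
        B.ng (B.an (B.ng (h p)) (B.ng (B.sig (B.Th l) (q.map h)))) else
          B.sig (B.Th l) (q.map h) := rfl
      rw [e1, e2, H.ok, H.an, H.bx, ih]
      split_ifs
      · rw [H.ng, H.an, H.ng, H.ng, ihq]
      · exact ihq

/-- valuations -/
structure IsV (A : Alg α) (v : α → Prop) : Prop where
  ng : ∀ x, v (A.ng x) ↔ ¬ v x
  an : ∀ x y, v (A.an x y) ↔ v x ∧ v y
  tp : v A.tp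

theorem IsV.dsc_ex {v : α → Prop} (h : IsV A v) (l : List α) :
    ∃ p ∈ dsc A.ng A.an A.tp l, v p := by
  induction l with
  | nil => exact ⟨A.tp, by simp [dsc], h.tp⟩
  | cons f l ih =>
    obtain ⟨p, hp, hv⟩ := ih
    by_cases hf : v f
    · exact ⟨A.an f p, List.mem_append_left _ (List.mem_map_of_mem hp), (h.an _ _).2 ⟨hf, hv⟩⟩
    · exact ⟨A.an (A.ng f) p, List.mem_append_right _ (List.mem_map_of_mem hp),
        (h.an _ _).2 ⟨(h.ng _).2 hf, hv⟩⟩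

theorem IsV.dsc_eq {v v' : α → Prop} (h : IsV A v) (h' : IsV A v') (l : List α) (p : α)
    (hp : p ∈ dsc A.ng A.an A.tp l) (hv : v p) (hv' : v' p) : ∀ x ∈ l, (v x ↔ v' x) := by
  induction l generalizing p with
  | nil => simp
  | cons f l ih =>
    simp only [dsc, List.mem_append, List.mem_map] at hp
    rcases hp with ⟨q, hq, rfl⟩ | ⟨q, hq, rfl⟩
    · rw [h.an] at hv; rw [h'.an] at hv'
      intro x hx
      rcases List.mem_cons.1 hx with rfl | hx
      · exact iff_of_true hv.1 hv'.1
      · exact ih q hq hv.2 hv'.2 x hx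
    · rw [h.an, h.ng] at hv; rw [h'.an, h'.ng] at hv'
      intro x hx
      rcases List.mem_cons.1 hx with rfl | hx
      · exact iff_of_false hv.1 hv'.1
      · exact ih q hq hv.2 hv'.2 x hx

/-- evaluation in a structure -/
structure IsEv (A : Alg α) {D : Type} (dom : Set D) (ev : α → D → Prop) : Prop where
  val : ∀ a, IsV A (fun x => ev x a)
  ex : ∀ x a, ev (A.ex x) a ↔ ∃ b ∈ dom, ev x b

theorem IsEv.sub {D D' : Type} {dom : Set D} {dom' : Set D'} {ev : α → D → Prop}
    {ev' : α → D' → Prop} (h : IsEv A dom ev) (h' : IsEv A dom' ev') (l : ℕ) (p : α)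
    (hp : p ∈ A.Q l) (a : D) (a' : D') (ha : ev p a) (ha' : ev' p a') :
    {s : Set ℕ | ∃ b ∈ dom, s = {c | c < l ∧ ev (A.T c) b}} ⊆
    {s : Set ℕ | ∃ b ∈ dom', s = {c | c < l ∧ ev' (A.T c) b}} := by
  rintro s ⟨b, hb, rfl⟩
  obtain ⟨r, hr, hrv⟩ := (h.val b).dsc_ex ((List.range l).map A.T)
  have := (h.val a).dsc_eq (h'.val a') _ p hp ha ha' (A.ex r) (List.mem_map_of_mem hr)
  obtain ⟨b', hb', hr'⟩ := (h'.ex _ _).1 (this.1 ((h.ex _ _).2 ⟨b, hb, hrv⟩))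
  refine ⟨b', hb', ?_⟩
  ext c
  simp only [Set.mem_ofPred_eq]
  apply and_congr_right
  intro hc
  exact (h.val b).dsc_eq (h'.val b') _ r hr hrv hr' (A.T c)
    (List.mem_map_of_mem (List.mem_range.2 hc))

theorem IsEv.eq {D D' : Type} {dom : Set D} {dom' : Set D'} {ev : α → D → Prop}
    {ev' : α → D' → Prop} (h : IsEv A dom ev) (h' : IsEv A dom' ev') (l : ℕ) (p : α)
    (hp : p ∈ A.Q l) (a : D) (a' : D') (ha : ev p a) (ha' : ev' p a') :
    {s : Set ℕ | ∃ b ∈ dom, s = {c | c < l ∧ ev (A.T c) b}} =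
    {s : Set ℕ | ∃ b ∈ dom', s = {c | c < l ∧ ev' (A.T c) b}} :=
  Set.Subset.antisymm (h.sub h' l p hp a a' ha ha') (h'.sub h l p hp a' a ha' ha)

theorem IsV.sig {v : α → Prop} (h : IsV A v) (θ : α) (l : List α) :
    v (A.sig θ l) ↔ ∃ p ∈ l, A.ok (A.an p (A.bx θ)) = true ∧ v p := by
  induction l with
  | nil => simp [Alg.sig, h.ng, h.tp]
  | cons p q ih =>
    have e1 : A.sig θ (p :: q) = if A.ok (A.an p (A.bx θ)) then
        A.ng (A.an (A.ng p) (A.ng (A.sig θ q))) else A.sig θ q := rfl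
    rw [e1]
    split_ifs with hok
    · rw [h.ng, h.an, h.ng, h.ng, ih]
      simp only [List.mem_cons, exists_eq_or_imp, hok, true_and]
      exact not_and_or.trans (or_congr not_not not_not)
    · simp only [List.mem_cons, exists_eq_or_imp, hok, ih]
      simp
end Alg

/-- the side lemma -/
theorem side {M α : Type} (d : DSem) (C : Set (KFrame M)) (hC : C.Nonempty) (t : ℕ → OV M)
    (th : ℕ → OV M) (Qp : ℕ → Set α) (π : α → OV M) (qq : ℕ → α → Set (Set ℕ))
    (h0 : ∀ F ∈ C, ∀ (𝔪 : KModel F) w a, 𝔪.eval (th 0) w a)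
    (hs : ∀ l, ∀ F ∈ C, ∀ (𝔪 : KModel F) w a, 𝔪.eval (th (l + 1)) w a →
      (∃ p ∈ Qp l, 𝔪.eval (π p) w a) ∧ ∀ m v, F.R m w v → 𝔪.eval (th l) v a)
    (hs' : ∀ l, ∀ F ∈ C, ∀ (𝔪 : KModel F) w a, (∃ p ∈ Qp l, 𝔪.eval (π p) w a) →
      (∀ m v, F.R m w v → 𝔪.eval (th l) v a) → 𝔪.eval (th (l + 1)) w a)
    (hq : ∀ l, ∀ p ∈ Qp l, ∀ F ∈ C, ∀ 𝔪 : KModel F, 𝔪.IsD d → ∀ w, ∀ a ∈ 𝔪.dom w,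
      𝔪.eval (π p) w a → qsOf 𝔪 t (l + 1) w = qq l p)
    (hp : ∀ l, ∀ p ∈ Qp l, ∃ F ∈ C, ∃ 𝔪 : KModel F, 𝔪.IsD d ∧ ∃ w, ∃ a ∈ 𝔪.dom w,
      𝔪.eval (π p) w a ∧ ∀ m v, F.R m w v → 𝔪.eval (th l) v a)
    (S : Set (ℕ × Set (Set ℕ)))
    (hS : S = {τ | τ = (0, {∅}) ∨ ∃ l, ∃ p ∈ Qp l, τ = (l + 1, qq l p)}) :
    (∀ F ∈ C, ∀ 𝔪 : KModel F, 𝔪.IsD d → ∀ l w, ∀ a ∈ 𝔪.dom w, 𝔪.eval (th l) w a →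
      (l, qsOf 𝔪 t l w) ∈ S) ∧
    (∀ τ ∈ S, ∃ c : LComp d C, (∀ w, c.tag t w ∈ S) ∧ ∃ w, c.tag t w = τ) := by
  have hz : ∀ (F : KFrame M) (𝔪 : KModel F) w, qsOf 𝔪 t 0 w = {∅} := by
    intro F 𝔪 w
    ext s
    simp only [qsOf, tpOf, Set.mem_ofPred_eq, Set.mem_singleton_iff, Nat.not_lt_zero, false_and]
    obtain ⟨a, ha⟩ := 𝔪.domNe w
    constructor
    · rintro ⟨a, _, rfl⟩; ext; simp
    · rintro rfl; exact ⟨a, ha, by ext; simp⟩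
  have hA : ∀ F ∈ C, ∀ 𝔪 : KModel F, 𝔪.IsD d → ∀ l w, ∀ a ∈ 𝔪.dom w, 𝔪.eval (th l) w a →
      (l, qsOf 𝔪 t l w) ∈ S := by
    intro F hF 𝔪 hd l w a ha hev
    rw [hS]
    cases l with
    | zero => exact Or.inl (by rw [hz])
    | succ l =>
      obtain ⟨⟨p, hp, hpe⟩, _⟩ := hs l F hF 𝔪 w a hev
      exact Or.inr ⟨l, p, hp, by rw [hq l p hp F hF 𝔪 hd w a ha hpe]⟩
  have hB : ∀ F ∈ C, ∀ 𝔪 : KModel F, 𝔪.IsD d → ∀ l w, ∀ a ∈ 𝔪.dom w, 𝔪.eval (th l) w a →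
      ∃ c : LComp d C, (∀ w, c.tag t w ∈ S) ∧ ∃ w', c.tag t w' = (l, qsOf 𝔪 t l w) := by
    intro F hF 𝔪 hd l w a ha hev
    classical
    let P : F.W → ℕ → Prop := fun w k => ∃ a ∈ 𝔪.dom w, 𝔪.eval (th k) w a
    have hP0 : ∀ w, P w 0 := fun w => by
      obtain ⟨a, ha⟩ := 𝔪.domNe w
      exact ⟨a, ha, h0 F hF 𝔪 w a⟩
    let lev : F.W → ℕ := fun w => Nat.findGreatest (P w) l
    have hlevP : ∀ w, P w (lev w) := fun w => Nat.findGreatest_spec (Nat.zero_le l) (hP0 w)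
    refine ⟨⟨F, hF, 𝔪, hd, lev, ?_⟩, ?_, w, ?_⟩
    · intro m w v hR
      obtain ⟨a, ha, he⟩ := hlevP w
      rcases hk : lev w with _ | k
      · exact Nat.zero_le _
      · rw [hk] at he
        have h1 : P v k := ⟨a, 𝔪.expand m w v hR ha, (hs k F hF 𝔪 w a he).2 m v hR⟩
        have h2 : k + 1 ≤ l := hk ▸ Nat.findGreatest_le l
        have : k ≤ lev v := Nat.le_findGreatest (by omega) h1
        omega
    · intro w
      obtain ⟨a, ha, he⟩ := hlevP w
      exact hA F hF 𝔪 hd _ w a ha he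
    · have : lev w = l := le_antisymm (Nat.findGreatest_le l)
        (Nat.le_findGreatest le_rfl ⟨a, ha, hev⟩)
      simp only [LComp.tag, this]
  refine ⟨hA, ?_⟩
  intro τ hτ
  rw [hS] at hτ
  rcases hτ with rfl | ⟨l, p, hpQ, rfl⟩
  · obtain ⟨F, hF⟩ := hC
    let 𝔪 : KModel F := ⟨Unit, fun _ => Set.univ, fun _ => ⟨(), trivial⟩,
      fun _ _ _ _ => subset_rfl, fun _ _ => ∅⟩
    obtain ⟨w⟩ := F.ne
    have := hB F hF 𝔪 (fun _ _ => rfl) 0 w () trivial (h0 F hF 𝔪 w ())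
    rwa [hz] at this
  · obtain ⟨F, hF, 𝔪, hd, w, a, ha, h1, h2⟩ := hp l p hpQ
    have := hB F hF 𝔪 hd (l + 1) w a ha (hs' l F hF 𝔪 w a ⟨p, hpQ, h1⟩ h2)
    rwa [hq l p hpQ F hF 𝔪 hd w a ha h1] at this

end OneVarML

namespace OneVarML

section main
variable {M1 M2 : Type}

open Classical in
/-- the algebra of pairs of formulas -/
noncomputable def fAlg (e : M1 ⊕ M2 → ℕ) (ms1 : List M1) (ms2 : List M2)
    (L1 : Set (OV M1)) (L2 : Set (OV M2)) : Alg (OV M1 × OV M2) where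
  ng p := (.neg p.1, .neg p.2)
  an p q := (.and p.1 q.1, .and p.2 q.2)
  ex p := (.ex p.1, .ex p.2)
  bx p := (bxl ms1 p.1, bxl ms2 p.2)
  tp := (top M1, top M2)
  T c := (tr1 (OV.encode e) (dec e c), tr2 (OV.encode e) (dec e c))
  ok p := decide (OV.neg p.1 ∉ L1 ∧ OV.neg p.2 ∉ L2)

theorem eval_top {M : Type} {F : KFrame M} (𝔪 : KModel F) (w : F.W) (a : 𝔪.D) :
    𝔪.eval (top M) w a := by
  simp only [top, KModel.eval]; tauto

theorem eval_bxl {M : Type} {F : KFrame M} (𝔪 : KModel F) (ms : List M) (θ : OV M) (w : F.W)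
    (a : 𝔪.D) : 𝔪.eval (bxl ms θ) w a ↔ ∀ m ∈ ms, ∀ v, F.R m w v → 𝔪.eval θ v a := by
  induction ms with
  | nil => simp [bxl, eval_top]
  | cons m ms ih => simp [bxl, KModel.eval, ih]

theorem isEv1 (e : M1 ⊕ M2 → ℕ) (ms1 : List M1) (ms2 : List M2)
    (L1 : Set (OV M1)) (L2 : Set (OV M2)) {F : KFrame M1} (𝔪 : KModel F) (w : F.W) :
    (fAlg e ms1 ms2 L1 L2).IsEv (𝔪.dom w) (fun p a => 𝔪.eval p.1 w a) :=
  ⟨fun a => ⟨fun _ => Iff.rfl, fun _ _ => Iff.rfl, eval_top 𝔪 w a⟩, fun _ _ => Iff.rfl⟩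

theorem isEv2 (e : M1 ⊕ M2 → ℕ) (ms1 : List M1) (ms2 : List M2)
    (L1 : Set (OV M1)) (L2 : Set (OV M2)) {F : KFrame M2} (𝔪 : KModel F) (w : F.W) :
    (fAlg e ms1 ms2 L1 L2).IsEv (𝔪.dom w) (fun p a => 𝔪.eval p.2 w a) :=
  ⟨fun a => ⟨fun _ => Iff.rfl, fun _ _ => Iff.rfl, eval_top 𝔪 w a⟩, fun _ _ => Iff.rfl⟩

theorem complete_dir (d : DSem) (e : M1 ⊕ M2 → ℕ) (he : Function.Injective e)
    (ms1 : List M1) (ms2 : List M2) (hm1 : ∀ m, m ∈ ms1) (hm2 : ∀ m, m ∈ ms2)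
    (C1 : Set (KFrame M1)) (C2 : Set (KFrame M2)) (hC1 : C1.Nonempty) (hC2 : C2.Nonempty)
    (hdu1 : ClosedDU C1) (hdu2 : ClosedDU C2)
    (L1 : Set (OV M1)) (L2 : Set (OV M2)) (hc1 : DComplete d L1 C1) (hc2 : DComplete d L2 C2)
    (φ : OV (M1 ⊕ M2)) (hφ : φ ∈ fusion L1 L2) :
    OV.imp ((fAlg e ms1 ms2 L1 L2).Th (OV.encode e φ + 1)).1 (tr1 (OV.encode e) φ) ∈ L1 := by
  set A := fAlg e ms1 ms2 L1 L2 with hA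
  by_contra hn
  rw [hc1] at hn
  simp only [LogD, KModel.TrueIn, KModel.TrueAt, Set.mem_ofPred_eq, not_forall] at hn
  obtain ⟨F, hF, 𝔪, hd, w, a, ha, hn⟩ := hn
  rw [eval_imp] at hn
  obtain ⟨hth, hnt⟩ := Classical.not_imp.1 hn
  let Qp : ℕ → Set (OV M1 × OV M2) := fun l =>
    {p | p ∈ A.Q (l + 1) ∧ A.ok (A.an p (A.bx (A.Th l))) = true}
  let T1 : ℕ → OV M1 := fun c => (A.T c).1
  let T2 : ℕ → OV M2 := fun c => (A.T c).2
  have hok : ∀ p, A.ok p = true → (OV.neg p.1 ∉ L1 ∧ OV.neg p.2 ∉ L2) := by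
    intro p hp
    simpa [hA, fAlg] using hp
  have hp1 : ∀ l, ∀ p ∈ Qp l, ∃ F ∈ C1, ∃ 𝔪 : KModel F, 𝔪.IsD d ∧ ∃ w, ∃ a ∈ 𝔪.dom w,
      𝔪.eval p.1 w a ∧ ∀ m v, F.R m w v → 𝔪.eval (A.Th l).1 v a := by
    rintro l p ⟨_, hp⟩
    have h := (hok _ hp).1
    rw [hc1] at h
    simp only [LogD, KModel.TrueIn, KModel.TrueAt, Set.mem_ofPred_eq, not_forall] at h
    obtain ⟨F, hF, 𝔪, hd, w, a, ha, h⟩ := h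
    have h := not_not.1 h
    exact ⟨F, hF, 𝔪, hd, w, a, ha, h.1, fun m v hR =>
      (eval_bxl 𝔪 ms1 _ w a).1 h.2 m (hm1 m) v hR⟩
  have hp2 : ∀ l, ∀ p ∈ Qp l, ∃ F ∈ C2, ∃ 𝔪 : KModel F, 𝔪.IsD d ∧ ∃ w, ∃ a ∈ 𝔪.dom w,
      𝔪.eval p.2 w a ∧ ∀ m v, F.R m w v → 𝔪.eval (A.Th l).2 v a := by
    rintro l p ⟨_, hp⟩
    have h := (hok _ hp).2
    rw [hc2] at h
    simp only [LogD, KModel.TrueIn, KModel.TrueAt, Set.mem_ofPred_eq, not_forall] at h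
    obtain ⟨F, hF, 𝔪, hd, w, a, ha, h⟩ := h
    have h := not_not.1 h
    exact ⟨F, hF, 𝔪, hd, w, a, ha, h.1, fun m v hR =>
      (eval_bxl 𝔪 ms2 _ w a).1 h.2 m (hm2 m) v hR⟩
  have hqq : ∀ l p, ∃ s : Set (Set ℕ), p ∈ Qp l →
      (∀ (F : KFrame M1) (𝔪 : KModel F) w a, 𝔪.eval p.1 w a → qsOf 𝔪 T1 (l + 1) w = s) ∧
      (∀ (F : KFrame M2) (𝔪 : KModel F) w a, 𝔪.eval p.2 w a → qsOf 𝔪 T2 (l + 1) w = s) := by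
    intro l p
    by_cases hp : p ∈ Qp l
    · obtain ⟨F, hF, 𝔪, hd, w, a, ha, h, _⟩ := hp1 l p hp
      refine ⟨qsOf 𝔪 T1 (l + 1) w, fun _ => ⟨?_, ?_⟩⟩
      · intro F' 𝔪' w' a' h'
        exact (isEv1 e ms1 ms2 L1 L2 𝔪' w').eq (isEv1 e ms1 ms2 L1 L2 𝔪 w) (l + 1) p hp.1 a' a h' h
      · intro F' 𝔪' w' a' h'
        exact (isEv2 e ms1 ms2 L1 L2 𝔪' w').eq (isEv1 e ms1 ms2 L1 L2 𝔪 w) (l + 1) p hp.1 a' a h' h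
    · exact ⟨∅, fun h => absurd h hp⟩
  choose qq hqq using hqq
  let S : Set (ℕ × Set (Set ℕ)) := {τ | τ = (0, {∅}) ∨ ∃ l, ∃ p ∈ Qp l, τ = (l + 1, qq l p)}
  have s1 := side d C1 hC1 T1 (fun l => (A.Th l).1) Qp Prod.fst qq
    (fun F _ 𝔪 w a => eval_top 𝔪 w a)
    (fun l F _ 𝔪 w a h => by
      obtain ⟨p, hp, h1, h2⟩ := (((isEv1 e ms1 ms2 L1 L2 𝔪 w).val a).sig _ _).1 h.1
      exact ⟨⟨p, ⟨hp, h1⟩, h2⟩, fun m v hR => (eval_bxl 𝔪 ms1 _ w a).1 h.2 m (hm1 m) v hR⟩)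
    (fun l F _ 𝔪 w a ⟨p, hp, h1⟩ h2 => ⟨
      (((isEv1 e ms1 ms2 L1 L2 𝔪 w).val a).sig _ _).2 ⟨p, hp.1, hp.2, h1⟩,
      (eval_bxl 𝔪 ms1 _ w a).2 fun m _ v hR => h2 m v hR⟩)
    (fun l p hp F _ 𝔪 _ w a _ h => (hqq l p hp).1 F 𝔪 w a h)
    hp1 S rfl
  have s2 := side d C2 hC2 T2 (fun l => (A.Th l).2) Qp Prod.snd qq
    (fun F _ 𝔪 w a => eval_top 𝔪 w a)
    (fun l F _ 𝔪 w a h => by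
      obtain ⟨p, hp, h1, h2⟩ := (((isEv2 e ms1 ms2 L1 L2 𝔪 w).val a).sig _ _).1 h.1
      exact ⟨⟨p, ⟨hp, h1⟩, h2⟩, fun m v hR => (eval_bxl 𝔪 ms2 _ w a).1 h.2 m (hm2 m) v hR⟩)
    (fun l F _ 𝔪 w a ⟨p, hp, h1⟩ h2 => ⟨
      (((isEv2 e ms1 ms2 L1 L2 𝔪 w).val a).sig _ _).2 ⟨p, hp.1, hp.2, h1⟩,
      (eval_bxl 𝔪 ms2 _ w a).2 fun m _ v hR => h2 m v hR⟩)
    (fun l p hp F _ 𝔪 _ w a _ h => (hqq l p hp).2 F 𝔪 w a h)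
    hp2 S rfl
  have hSne : S.Nonempty := ⟨_, Or.inl rfl⟩
  obtain ⟨c1, r1, o1⟩ := union_comp d C1 hdu1 T1 S hSne s1.2
  obtain ⟨c2, r2, o2⟩ := union_comp d C2 hdu2 T2 S hSne s2.2
  have hT1 : ∀ ψ, T1 (OV.encode e ψ) = tr1 (OV.encode e) ψ := fun ψ => by
    simp only [T1, hA, fAlg, dec_encode he]
  have hT2 : ∀ ψ, T2 (OV.encode e ψ) = tr2 (OV.encode e) ψ := fun ψ => by
    simp only [T2, hA, fAlg, dec_encode he]
  obtain ⟨G, g1, g2, g3⟩ := fuse d C1 C2 hdu1 hdu2 e T1 T2 hT1 hT2 c1 c2 (r1.trans r2.symm) o1 o2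
  have hmem : (OV.encode e φ + 1, qsOf 𝔪 T1 (OV.encode e φ + 1) w) ∈ Set.range (c1.tag T1) := by
    rw [r1]; exact s1.1 F hF 𝔪 hd _ w a ha hth
  obtain ⟨w', hw'⟩ := hmem
  simp only [LComp.tag, Prod.mk.injEq] at hw'
  obtain ⟨hl, hq⟩ := hw'
  rw [hl] at hq
  refine g3 w' φ (by omega) ?_ (fusion_valid d L1 L2 G (hc1 ▸ g1) (hc2 ▸ g2) φ hφ)
  have : tpOf 𝔪 T1 (OV.encode e φ + 1) w a ∈ qsOf c1.𝔪 T1 (OV.encode e φ + 1) w' := by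
    rw [hq]; exact ⟨a, ha, rfl⟩
  obtain ⟨b, hb, hab⟩ := this
  intro htr
  apply hnt
  have h1 : OV.encode e φ ∈ tpOf c1.𝔪 T1 (OV.encode e φ + 1) w' b :=
    ⟨Nat.lt_succ_self _, by rw [hT1]; exact htr b hb⟩
  rw [← hab] at h1
  have := h1.2
  rwa [hT1] at this

/-- back translation -/
noncomputable def rho {M N : Type} (e : N → ℕ) (f : M → N) (ψ : OV M) : OV N :=
  OV.subst (dec e) (OV.mapOp f ψ)

theorem rho_tr1 {e : M1 ⊕ M2 → ℕ} (he : Function.Injective e) (ψ : OV (M1 ⊕ M2)) :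
    rho e Sum.inl (tr1 (OV.encode e) ψ) = ψ := by
  induction ψ with
  | atom n => exact dec_encode he _
  | neg φ ih => exact congrArg OV.neg ih
  | and φ ψ ih1 ih2 => exact congrArg₂ OV.and ih1 ih2
  | ex φ ih => exact congrArg OV.ex ih
  | box m φ ih =>
    rcases m with m | m
    · exact congrArg (OV.box _) ih
    · exact dec_encode he _

theorem rho_tr2 {e : M1 ⊕ M2 → ℕ} (he : Function.Injective e) (ψ : OV (M1 ⊕ M2)) :
    rho e Sum.inr (tr2 (OV.encode e) ψ) = ψ := by
  induction ψ with
  | atom n => exact dec_encode he _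
  | neg φ ih => exact congrArg OV.neg ih
  | and φ ψ ih1 ih2 => exact congrArg₂ OV.and ih1 ih2
  | ex φ ih => exact congrArg OV.ex ih
  | box m φ ih =>
    rcases m with m | m
    · exact dec_encode he _
    · exact congrArg (OV.box _) ih

theorem rho_mem1 {e : M1 ⊕ M2 → ℕ} (L1 : Set (OV M1)) (L2 : Set (OV M2)) {ψ : OV M1}
    (h : ψ ∈ L1) : rho e Sum.inl ψ ∈ fusion L1 L2 :=
  (fusion_logic L1 L2).subst _ _ (fun _ hL => hL.2.1 ⟨ψ, h, rfl⟩)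

theorem rho_mem2 {e : M1 ⊕ M2 → ℕ} (L1 : Set (OV M1)) (L2 : Set (OV M2)) {ψ : OV M2}
    (h : ψ ∈ L2) : rho e Sum.inr ψ ∈ fusion L1 L2 :=
  (fusion_logic L1 L2).subst _ _ (fun _ hL => hL.2.2 ⟨ψ, h, rfl⟩)

theorem rho_bxl {M N : Type} {e : N → ℕ} (he : Function.Injective e) (f : M → N)
    {L : Set (OV N)} (hL : IsOVLogic L) (θ : OV M) (h : rho e f θ ∈ L) (ms : List M) :
    rho e f (bxl ms θ) ∈ L := by
  induction ms with
  | nil =>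
    refine taut he hL _ fun v hv => ?_
    have : rho e f (bxl [] θ) = .neg (.and (dec e 0) (.neg (dec e 0))) := rfl
    rw [this, hv.neg, hv.and, hv.neg]; tauto
  | cons m ms ih =>
    refine taut2 he hL (hL.nec (f m) _ h) ih _ fun v hv h1 h2 => ?_
    exact (hv.and _ _).2 ⟨h1, h2⟩

theorem dsc_good {α : Type} (A : Alg α) (P : α → Prop) (hng : ∀ x, P x → P (A.ng x))
    (han : ∀ x y, P x → P y → P (A.an x y)) (htp : P A.tp) (l : List α) (hl : ∀ x ∈ l, P x) :
    ∀ x ∈ dsc A.ng A.an A.tp l, P x := by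
  induction l with
  | nil => simpa [dsc] using htp
  | cons f l ih =>
    have hf : P f := hl f (by simp)
    have ih := ih fun x hx => hl x (by simp [hx])
    simp only [dsc, List.mem_append, List.mem_map]
    rintro x (⟨y, hy, rfl⟩ | ⟨y, hy, rfl⟩)
    · exact han _ _ hf (ih y hy)
    · exact han _ _ (hng _ hf) (ih y hy)

theorem sound_Th (e : M1 ⊕ M2 → ℕ) (he : Function.Injective e)
    (ms1 : List M1) (ms2 : List M2) (L1 : Set (OV M1)) (L2 : Set (OV M2)) (l : ℕ) :
    rho e Sum.inl ((fAlg e ms1 ms2 L1 L2).Th l).1 ∈ fusion L1 L2 ∧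
    rho e Sum.inr ((fAlg e ms1 ms2 L1 L2).Th l).2 ∈ fusion L1 L2 := by
  set A := fAlg e ms1 ms2 L1 L2 with hA
  have hL := fusion_logic L1 L2
  have hv1 : ∀ v : OV (M1 ⊕ M2) → Prop, IsVal v → A.IsV (fun p => v (rho e Sum.inl p.1)) := by
    intro v hv
    refine ⟨fun p => hv.neg _, fun p q => hv.and _ _, ?_⟩
    have : rho e Sum.inl A.tp.1 = .neg (.and (dec e 0) (.neg (dec e 0))) := rfl
    rw [this, hv.neg, hv.and, hv.neg]; tauto
  have hv2 : ∀ v : OV (M1 ⊕ M2) → Prop, IsVal v → A.IsV (fun p => v (rho e Sum.inr p.2)) := by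
    intro v hv
    refine ⟨fun p => hv.neg _, fun p q => hv.and _ _, ?_⟩
    have : rho e Sum.inr A.tp.2 = .neg (.and (dec e 0) (.neg (dec e 0))) := rfl
    rw [this, hv.neg, hv.and, hv.neg]; tauto
  induction l with
  | zero => exact ⟨taut he hL _ fun v hv => (hv1 v hv).tp, taut he hL _ fun v hv => (hv2 v hv).tp⟩
  | succ l ih =>
    obtain ⟨ih1, ih2⟩ := ih
    have b1 := rho_bxl he Sum.inl hL _ ih1 ms1
    have b2 := rho_bxl he Sum.inr hL _ ih2 ms2
    have hgood : ∀ p ∈ A.Q (l + 1), rho e Sum.inl p.1 = rho e Sum.inr p.2 := by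
      refine dsc_good A (fun p => rho e Sum.inl p.1 = rho e Sum.inr p.2)
        (fun x h => congrArg OV.neg h) (fun x y h h' => congrArg₂ OV.and h h') rfl _ ?_
      intro x hx
      obtain ⟨y, hy, rfl⟩ := List.mem_map.1 hx
      refine congrArg OV.ex ?_
      refine dsc_good A (fun p => rho e Sum.inl p.1 = rho e Sum.inr p.2)
        (fun x h => congrArg OV.neg h) (fun x y h h' => congrArg₂ OV.and h h') rfl _ ?_ y hy
      intro x hx
      obtain ⟨c, _, rfl⟩ := List.mem_map.1 hx
      exact (rho_tr1 he _).trans (rho_tr2 he _).symm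
    -- nonpassing descriptions are refuted
    have hno : ∀ p ∈ A.Q (l + 1), A.ok (A.an p (A.bx (A.Th l))) ≠ true →
        OV.neg (rho e Sum.inl p.1) ∈ fusion L1 L2 := by
      intro p hp hn
      have : OV.neg (A.an p (A.bx (A.Th l))).1 ∈ L1 ∨ OV.neg (A.an p (A.bx (A.Th l))).2 ∈ L2 := by
        by_contra hcon
        apply hn
        rw [not_or] at hcon
        classical
        simpa [hA, fAlg] using hcon
      rcases this with h | h
      · refine taut2 he hL (rho_mem1 (e := e) L1 L2 h) b1 _ fun v hv h1 h2 => ?_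
        have h1 := (hv.neg _).1 h1
        exact (hv.neg _).2 fun h3 => h1 ((hv.and _ _).2 ⟨h3, h2⟩)
      · rw [hgood p hp]
        refine taut2 he hL (rho_mem2 (e := e) L1 L2 h) b2 _ fun v hv h1 h2 => ?_
        have h1 := (hv.neg _).1 h1
        exact (hv.neg _).2 fun h3 => h1 ((hv.and _ _).2 ⟨h3, h2⟩)
    have hbig : ∀ q : List (OV M1 × OV M2), (∀ p ∈ q, p ∈ A.Q (l + 1)) →
        ∃ χ ∈ fusion L1 L2, ∀ v, IsVal v → v χ → (∃ p ∈ q, v (rho e Sum.inl p.1)) →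
          ∃ p ∈ q, A.ok (A.an p (A.bx (A.Th l))) = true ∧ v (rho e Sum.inl p.1) := by
      intro q
      induction q with
      | nil =>
        intro _
        exact ⟨_, taut he hL (top _) fun v hv => hv.top, by simp⟩
      | cons p q ihq =>
        intro hq
        obtain ⟨χ, hχ, h⟩ := ihq fun x hx => hq x (by simp [hx])
        by_cases hok : A.ok (A.an p (A.bx (A.Th l))) = true
        · refine ⟨χ, hχ, fun v hv hvχ hex => ?_⟩
          obtain ⟨p', hp', hvp⟩ := hex
          rcases List.mem_cons.1 hp' with rfl | hp'
          · exact ⟨p', by simp, hok, hvp⟩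
          · obtain ⟨p'', h1, h2⟩ := h v hv hvχ ⟨p', hp', hvp⟩
            exact ⟨p'', by simp [h1], h2⟩
        · refine ⟨.and χ (.neg (rho e Sum.inl p.1)),
            taut2 he hL hχ (hno p (hq p (by simp)) hok) _ fun v hv h1 h2 => (hv.and _ _).2 ⟨h1, h2⟩,
            fun v hv hvχ hex => ?_⟩
          rw [hv.and, hv.neg] at hvχ
          obtain ⟨p', hp', hvp⟩ := hex
          rcases List.mem_cons.1 hp' with rfl | hp'
          · exact absurd hvp hvχ.2
          · obtain ⟨p'', h1, h2⟩ := h v hv hvχ.1 ⟨p', hp', hvp⟩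
            exact ⟨p'', by simp [h1], h2⟩
    obtain ⟨χ, hχ, hχv⟩ := hbig (A.Q (l + 1)) fun _ h => h
    constructor
    · refine taut2 he hL hχ b1 _ fun v hv h1 h2 => ?_
      refine (hv.and _ _).2 ⟨?_, h2⟩
      exact ((hv1 v hv).sig _ _).2 (hχv v hv h1 ((hv1 v hv).dsc_ex _))
    · refine taut2 he hL hχ b2 _ fun v hv h1 h2 => ?_
      refine (hv.and _ _).2 ⟨?_, h2⟩
      obtain ⟨p, hp, h3, h4⟩ := hχv v hv h1 ((hv1 v hv).dsc_ex _)
      rw [hgood p hp] at h4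
      exact ((hv2 v hv).sig _ _).2 ⟨p, hp, h3, h4⟩

theorem sound_dir (e : M1 ⊕ M2 → ℕ) (he : Function.Injective e)
    (ms1 : List M1) (ms2 : List M2) (L1 : Set (OV M1)) (L2 : Set (OV M2)) (l : ℕ)
    (φ : OV (M1 ⊕ M2))
    (h : OV.imp ((fAlg e ms1 ms2 L1 L2).Th l).1 (tr1 (OV.encode e) φ) ∈ L1) :
    φ ∈ fusion L1 L2 := by
  have h1 := rho_mem1 (e := e) L1 L2 h
  have h2 := (fusion_logic L1 L2).mp _ _ h1 (sound_Th e he ms1 ms2 L1 L2 l).1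
  have h3 : rho e Sum.inl (tr1 (OV.encode e) φ) ∈ fusion L1 L2 := h2
  rwa [rho_tr1 he] at h3

end main
end OneVarML

namespace OneVarML

theorem comp_foldr {α β σ : Type} [Primcodable α] [Primcodable β] [Primcodable σ]
    {f : α → List β} {g : α → σ} {h : α → β × σ → σ} (hf : Computable f) (hg : Computable g)
    (hh : Computable₂ h) : Computable fun a => (f a).foldr (fun b s => h a (b, s)) (g a) := by
  have hstep : Computable₂ (fun (a : α) (p : ℕ × σ) =>
      (Option.casesOn ((f a).reverse[p.1]?) p.2 (fun b => h a (b, p.2)) : σ)) := by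
    have ho : Computable fun x : α × (ℕ × σ) => (f x.1).reverse[x.2.1]? :=
      Computable.list_getElem?.comp (Computable.list_reverse.comp (hf.comp Computable.fst))
        (Computable.fst.comp Computable.snd)
    have h2 : Computable₂ fun (x : α × (ℕ × σ)) (b : β) => h x.1 (b, x.2.2) :=
      hh.comp (Computable.fst.comp Computable.fst)
        (Computable.snd.pair (Computable.snd.comp (Computable.snd.comp Computable.fst)))
    exact Computable.option_casesOn ho (Computable.snd.comp Computable.snd) h2
  have := Computable.nat_rec (Computable.list_length.comp (Computable.list_reverse.comp hf)) hg hstep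
  refine this.of_eq fun a => ?_
  rw [← List.foldl_reverse]
  generalize (f a).reverse = r
  have key : ∀ k, (Nat.rec (motive := fun _ => σ) (g a)
      (fun y IH => (Option.casesOn (r[y]?) IH (fun b => h a (b, IH)) : σ)) k) =
      (r.take k).foldl (fun s b => h a (b, s)) (g a) := by
    intro k
    induction k with
    | zero => simp
    | succ k ih =>
      rw [List.take_add_one, List.foldl_append, ← ih]
      show (Option.casesOn (r[k]?) _ (fun b => h a (b, _)) : σ) = _
      cases r[k]? <;> rfl
  have h2 := key r.length
  rw [List.take_length] at h2
  exact h2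

theorem dsc_foldr {α : Type} (ng : α → α) (an : α → α → α) (tp : α) (l : List α) :
    dsc ng an tp l = l.foldr (fun f acc => acc.map (an f) ++ acc.map (an (ng f))) [tp] := by
  induction l with
  | nil => rfl
  | cons f l ih => simp only [dsc, List.foldr_cons, ih]

theorem dsc_primrec {α : Type} [Primcodable α] {ng : α → α} {an : α → α → α} (tp : α)
    (h1 : Primrec ng) (h2 : Primrec₂ an) : Primrec (dsc ng an tp) := by
  have hst : Primrec₂ (fun (_ : List α) (p : α × List α) =>
      p.2.map (an p.1) ++ p.2.map (an (ng p.1))) := by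
    refine Primrec.list_append.comp ?_ ?_
    · exact Primrec.list_map (Primrec.snd.comp Primrec.snd)
        (h2.comp (Primrec.fst.comp (Primrec.snd.comp Primrec.fst)) Primrec.snd)
    · exact Primrec.list_map (Primrec.snd.comp Primrec.snd)
        (h2.comp (h1.comp (Primrec.fst.comp (Primrec.snd.comp Primrec.fst))) Primrec.snd)
  exact (Primrec.list_foldr Primrec.id (Primrec.const [tp]) hst).of_eq
    fun l => (dsc_foldr ng an tp l).symm

theorem Th_computable {α : Type} [Primcodable α] (A : Alg α) (h1 : Primrec A.ng)
    (h2 : Primrec₂ A.an) (h3 : Primrec A.ex) (h4 : Primrec A.bx) (h5 : Primrec A.T)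
    (h6 : Computable A.ok) : Computable A.Th := by
  have hQ : Primrec A.Q := by
    have d := dsc_primrec A.tp h1 h2
    exact d.comp (Primrec.list_map (d.comp (Primrec.list_map Primrec.list_range
      (h5.comp Primrec.snd).to₂)) (h3.comp Primrec.snd).to₂)
  have hsig : Computable₂ (fun (θ : α) (l : List α) => A.sig θ l) := by
    have hst : Computable₂ (fun (x : α × List α) (p : α × α) =>
        bif A.ok (A.an p.1 (A.bx x.1)) then A.ng (A.an (A.ng p.1) (A.ng p.2)) else p.2) := by
      refine Computable.cond ?_ ?_ (Computable.snd.comp Computable.snd)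
      · exact h6.comp (h2.comp (Primrec.fst.comp Primrec.snd)
          (h4.comp (Primrec.fst.comp Primrec.fst))).to_comp
      · exact (h1.comp (h2.comp (h1.comp (Primrec.fst.comp Primrec.snd))
          (h1.comp (Primrec.snd.comp Primrec.snd)))).to_comp
    refine (comp_foldr Computable.snd (Computable.const (A.ng A.tp)) hst).of_eq fun x => ?_
    simp only [Alg.sig, Bool.cond_eq_ite]
  have hstep : Computable₂ (fun (_ : ℕ) (p : ℕ × α) =>
      A.an (A.sig p.2 (A.Q (p.1 + 1))) (A.bx p.2)) := by
    refine h2.to_comp.comp ?_ (h4.to_comp.comp (Computable.snd.comp Computable.snd))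
    exact hsig.comp (Computable.snd.comp Computable.snd)
      (hQ.to_comp.comp (Computable.succ.comp (Computable.fst.comp Computable.snd)))
  refine (Computable.nat_rec Computable.id (Computable.const A.tp) hstep).of_eq fun l => ?_
  induction l with
  | zero => rfl
  | succ l ih => simp only [Alg.Th, ← ih]; rfl

theorem mem_primrec (ns : List ℕ) : PrimrecPred (fun m : ℕ => m ∈ ns) := by
  induction ns with
  | nil => exact ⟨fun _ => isFalse (by simp), Primrec.const false⟩
  | cons n ns ih =>
    refine (PrimrecPred.or (Primrec.eq.comp Primrec.id (Primrec.const n)) ih).of_eq ?_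
    intro m; simp

/-- lookup of previous values -/
def look (l : List (Option ℕ)) (x : ℕ) : Option ℕ := (l[x]?).getD none

/-- one step of the recursion -/
def gstep (i : ℕ) (ns : List ℕ) (l : List (Option ℕ)) : Option ℕ :=
  if l.length.unpair.1 = 0 then some (Nat.pair 0 l.length)
  else if l.length.unpair.1 = 1 then (look l l.length.unpair.2).map (Nat.pair 1)
  else if l.length.unpair.1 = 2 then
    (look l l.length.unpair.2.unpair.1).bind fun a =>
      (look l l.length.unpair.2.unpair.2).map fun b => Nat.pair 2 (Nat.pair a b)
  else if l.length.unpair.1 = 3 then (look l l.length.unpair.2).map (Nat.pair 3)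
  else if l.length.unpair.1 = 4 then
    if l.length.unpair.2.unpair.1 ∈ ns then
      if l.length.unpair.2.unpair.1 % 2 = i then
        (look l l.length.unpair.2.unpair.2).map
          fun b => Nat.pair 4 (Nat.pair (l.length.unpair.2.unpair.1 / 2) b)
      else (look l l.length.unpair.2.unpair.2).map fun _ => Nat.pair 0 l.length
    else none
  else none

theorem gstep_primrec (i : ℕ) (ns : List ℕ) : Primrec (gstep i ns) := by
  have hlook : Primrec₂ look :=
    Primrec.option_getD.comp Primrec.list_getElem? (Primrec.const none)
  have hn : Primrec (fun l : List (Option ℕ) => l.length) := Primrec.list_length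
  have hk : Primrec (fun l : List (Option ℕ) => l.length.unpair.1) :=
    Primrec.fst.comp (Primrec.unpair.comp hn)
  have hx : Primrec (fun l : List (Option ℕ) => l.length.unpair.2) :=
    Primrec.snd.comp (Primrec.unpair.comp hn)
  have hm : Primrec (fun l : List (Option ℕ) => l.length.unpair.2.unpair.1) :=
    Primrec.fst.comp (Primrec.unpair.comp hx)
  have hy : Primrec (fun l : List (Option ℕ) => l.length.unpair.2.unpair.2) :=
    Primrec.snd.comp (Primrec.unpair.comp hx)
  have hlx := hlook.comp Primrec.id hx
  have hlm := hlook.comp Primrec.id hm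
  have hly := hlook.comp Primrec.id hy
  have hc : ∀ c, PrimrecPred (fun l : List (Option ℕ) => l.length.unpair.1 = c) := fun c =>
    Primrec.eq.comp hk (Primrec.const c)
  unfold gstep
  refine Primrec.ite (hc 0) (Primrec.option_some.comp (Primrec₂.natPair.comp (Primrec.const 0) hn)) ?_
  refine Primrec.ite (hc 1)
    (Primrec.option_map hlx (Primrec₂.natPair.comp (Primrec.const 1) Primrec.snd)) ?_
  refine Primrec.ite (hc 2) (Primrec.option_bind hlm (Primrec.option_map (hly.comp Primrec.fst)
    (Primrec₂.natPair.comp (Primrec.const 2)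
      (Primrec₂.natPair.comp (Primrec.snd.comp Primrec.fst) Primrec.snd)))) ?_
  refine Primrec.ite (hc 3)
    (Primrec.option_map hlx (Primrec₂.natPair.comp (Primrec.const 3) Primrec.snd)) ?_
  refine Primrec.ite (hc 4) (Primrec.ite ((mem_primrec ns).comp hm)
    (Primrec.ite (Primrec.eq.comp (Primrec.nat_mod.comp hm (Primrec.const 2)) (Primrec.const i))
      ?_ ?_) (Primrec.const none)) (Primrec.const none)
  · exact Primrec.option_map hly (Primrec₂.natPair.comp (Primrec.const 4)
      (Primrec₂.natPair.comp ((Primrec.nat_div.comp hm (Primrec.const 2)).comp Primrec.fst)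
        Primrec.snd))
  · exact Primrec.option_map hly (Primrec₂.natPair.comp (Primrec.const 0) (hn.comp Primrec.fst))

theorem rec_primrec (i : ℕ) (ns : List ℕ) (s : ℕ → Option ℕ)
    (h0 : ∀ n, s (Nat.pair 0 n) = some (Nat.pair 0 (Nat.pair 0 n)))
    (h1 : ∀ x, s (Nat.pair 1 x) = (s x).map (Nat.pair 1))
    (h2 : ∀ x y, s (Nat.pair 2 (Nat.pair x y)) = (s x).bind fun a => (s y).map fun b =>
      Nat.pair 2 (Nat.pair a b))
    (h3 : ∀ x, s (Nat.pair 3 x) = (s x).map (Nat.pair 3))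
    (h4 : ∀ m y, s (Nat.pair 4 (Nat.pair m y)) = if m ∈ ns then
      if m % 2 = i then (s y).map fun b => Nat.pair 4 (Nat.pair (m / 2) b)
      else (s y).map fun _ => Nat.pair 0 (Nat.pair 4 (Nat.pair m y)) else none)
    (h5 : ∀ k x, 5 ≤ k → s (Nat.pair k x) = none) : Primrec s := by
  have hg : Primrec₂ (fun (_ : Unit) (l : List (Option ℕ)) => some (gstep i ns l)) :=
    (Primrec.option_some.comp ((gstep_primrec i ns).comp Primrec.snd)).to₂
  have := Primrec.nat_strong_rec (fun (_ : Unit) => s) hg ?_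
  · exact this.comp (Primrec.const ()) Primrec.id
  rintro - n
  congr 1
  have hl : ∀ x, x < n → look ((List.range n).map s) x = s x := by
    intro x hx
    simp [look, hx]
  unfold gstep
  rw [List.length_map, List.length_range]
  obtain ⟨k, x, rfl⟩ : ∃ k x, n = Nat.pair k x := ⟨_, _, (Nat.pair_unpair n).symm⟩
  simp only [Nat.unpair_pair]
  rcases k with _ | _ | _ | _ | _ | k
  · simp [h0]
  · simp [h1, hl x (lt_pair (by norm_num))]
  · obtain ⟨a, b, rfl⟩ : ∃ a b, x = Nat.pair a b := ⟨_, _, (Nat.pair_unpair x).symm⟩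
    have hlt : Nat.pair a b < Nat.pair 2 (Nat.pair a b) := lt_pair (by norm_num)
    simp [h2, hl a ((Nat.left_le_pair _ _).trans_lt hlt), hl b ((Nat.right_le_pair _ _).trans_lt hlt)]
  · simp [h3, hl x (lt_pair (by norm_num))]
  · obtain ⟨a, b, rfl⟩ : ∃ a b, x = Nat.pair a b := ⟨_, _, (Nat.pair_unpair x).symm⟩
    have hlt : Nat.pair a b < Nat.pair 4 (Nat.pair a b) := lt_pair (by norm_num)
    simp [h4, hl b ((Nat.right_le_pair _ _).trans_lt hlt)]
  · simp [h5]

section deceq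
variable {M : Type} {e : M → ℕ}

theorem decO_0 (he : Function.Injective e) (n : ℕ) : decO e (Nat.pair 0 n) = some (.atom n) := (decO_iff he _ _).2 rfl

theorem decO_1 (he : Function.Injective e) (x : ℕ) : decO e (Nat.pair 1 x) = (decO e x).map .neg := by
  ext φ
  rw [decO_iff he]
  cases φ <;> simp [OV.encode, Nat.pair_eq_pair, decO_iff he]

theorem decO_3 (he : Function.Injective e) (x : ℕ) : decO e (Nat.pair 3 x) = (decO e x).map .ex := by
  ext φ
  rw [decO_iff he]
  cases φ <;> simp [OV.encode, Nat.pair_eq_pair, decO_iff he]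

theorem decO_2 (he : Function.Injective e) (x y : ℕ) : decO e (Nat.pair 2 (Nat.pair x y)) =
    (decO e x).bind fun a => (decO e y).map fun b => .and a b := by
  ext φ
  rw [decO_iff he]
  cases φ <;> simp [OV.encode, Nat.pair_eq_pair, decO_iff he, Option.bind_eq_some_iff]

theorem decO_4 (he : Function.Injective e) (m : M) (y : ℕ) : decO e (Nat.pair 4 (Nat.pair (e m) y)) =
    (decO e y).map (.box m) := by
  ext φ
  rw [decO_iff he]
  cases φ <;> simp [OV.encode, Nat.pair_eq_pair, decO_iff he, he.eq_iff, eq_comm, and_comm]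

theorem decO_4n (he : Function.Injective e) (m : ℕ) (y : ℕ) (hm : ∀ m', e m' ≠ m) :
    decO e (Nat.pair 4 (Nat.pair m y)) = none := by
  ext φ
  rw [decO_iff he]
  cases φ <;> simp [OV.encode, Nat.pair_eq_pair, hm]

theorem decO_5 (he : Function.Injective e) (k x : ℕ) (hk : 5 ≤ k) : decO e (Nat.pair k x) = none := by
  ext φ
  rw [decO_iff he]
  cases φ <;> simp [OV.encode, Nat.pair_eq_pair] <;> omega

end deceq
end OneVarML

namespace OneVarML

section final
variable {M1 M2 : Type}

/-- the numbering of the fused signature -/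
def eS (e1 : M1 → ℕ) (e2 : M2 → ℕ) : M1 ⊕ M2 → ℕ :=
  Sum.elim (fun m => 2 * e1 m) (fun m => 2 * e2 m + 1)

theorem eS_inj {e1 : M1 → ℕ} {e2 : M2 → ℕ} (he1 : Function.Injective e1)
    (he2 : Function.Injective e2) : Function.Injective (eS e1 e2) := by
  rintro (a | a) (b | b) h <;> simp only [eS, Sum.elim_inl, Sum.elim_inr] at h
  · rw [he1 (by omega : e1 a = e1 b)]
  · omega
  · omega
  · rw [he2 (by omega : e2 a = e2 b)]

theorem s_primrec1 {e1 : M1 → ℕ} {e2 : M2 → ℕ} (he : Function.Injective (eS e1 e2))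
    (ns : List ℕ) (hns : ∀ n, n ∈ ns ↔ ∃ m, eS e1 e2 m = n) :
    Primrec (fun c => (decO (eS e1 e2) c).map
      (fun ψ => OV.encode e1 (tr1 (OV.encode (eS e1 e2)) ψ))) := by
  refine rec_primrec 0 ns _ ?_ ?_ ?_ ?_ ?_ ?_
  · intro n; rw [decO_0 he]; rfl
  · intro x; rw [decO_1 he]; cases decO (eS e1 e2) x <;> rfl
  · intro x y
    rw [decO_2 he]; cases decO (eS e1 e2) x <;> cases decO (eS e1 e2) y <;> rfl
  · intro x; rw [decO_3 he]; cases decO (eS e1 e2) x <;> rfl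
  · intro m y
    by_cases hm : m ∈ ns
    · obtain ⟨m, rfl⟩ := (hns m).1 hm
      rw [decO_4 he, if_pos hm]
      rcases m with m | m
      · have h1 : eS e1 e2 (Sum.inl m) % 2 = 0 := by simp [eS]
        have h2 : eS e1 e2 (Sum.inl m) / 2 = e1 m := by simp [eS]
        rw [if_pos h1, h2]
        cases decO (eS e1 e2) y <;> rfl
      · have h1 : eS e1 e2 (Sum.inr m) % 2 ≠ 0 := by simp [eS]
        rw [if_neg h1]
        rcases h : decO (eS e1 e2) y with _ | ψ
        · rfl
        · rw [decO_iff he] at h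
          subst h; rfl
    · rw [if_neg hm, decO_4n he]
      · rfl
      · intro m' h; exact hm ((hns m).2 ⟨m', h⟩)
  · intro k x hk; rw [decO_5 he k x hk]; rfl

theorem s_primrec2 {e1 : M1 → ℕ} {e2 : M2 → ℕ} (he : Function.Injective (eS e1 e2))
    (ns : List ℕ) (hns : ∀ n, n ∈ ns ↔ ∃ m, eS e1 e2 m = n) :
    Primrec (fun c => (decO (eS e1 e2) c).map
      (fun ψ => OV.encode e2 (tr2 (OV.encode (eS e1 e2)) ψ))) := by
  refine rec_primrec 1 ns _ ?_ ?_ ?_ ?_ ?_ ?_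
  · intro n; rw [decO_0 he]; rfl
  · intro x; rw [decO_1 he]; cases decO (eS e1 e2) x <;> rfl
  · intro x y
    rw [decO_2 he]; cases decO (eS e1 e2) x <;> cases decO (eS e1 e2) y <;> rfl
  · intro x; rw [decO_3 he]; cases decO (eS e1 e2) x <;> rfl
  · intro m y
    by_cases hm : m ∈ ns
    · obtain ⟨m, rfl⟩ := (hns m).1 hm
      rw [decO_4 he, if_pos hm]
      rcases m with m | m
      · have h1 : eS e1 e2 (Sum.inl m) % 2 ≠ 1 := by simp [eS]
        rw [if_neg h1]
        rcases h : decO (eS e1 e2) y with _ | ψ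
        · rfl
        · rw [decO_iff he] at h
          subst h; rfl
      · have h1 : eS e1 e2 (Sum.inr m) % 2 = 1 := by simp only [eS, Sum.elim_inr]; omega
        have h2 : eS e1 e2 (Sum.inr m) / 2 = e2 m := by simp only [eS, Sum.elim_inr]; omega
        rw [if_pos h1, h2]
        cases decO (eS e1 e2) y <;> rfl
    · rw [if_neg hm, decO_4n he]
      · rfl
      · intro m' h; exact hm ((hns m).2 ⟨m', h⟩)
  · intro k x hk; rw [decO_5 he k x hk]; rfl

/-- code of the verum constant -/
def ntop : ℕ := Nat.pair 1 (Nat.pair 2 (Nat.pair (Nat.pair 0 0) (Nat.pair 1 (Nat.pair 0 0))))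

/-- codes of conjunctions of boxes -/
def nbx : List ℕ → ℕ → ℕ
  | [], _ => ntop
  | m :: ms, x => Nat.pair 2 (Nat.pair (Nat.pair 4 (Nat.pair m x)) (nbx ms x))

theorem nbx_primrec (ns : List ℕ) : Primrec (nbx ns) := by
  induction ns with
  | nil => exact Primrec.const ntop
  | cons m ms ih =>
    exact Primrec₂.natPair.comp (Primrec.const 2) (Primrec₂.natPair.comp
      (Primrec₂.natPair.comp (Primrec.const 4) (Primrec₂.natPair.comp (Primrec.const m) Primrec.id))
      ih)

theorem encode_bxl {M : Type} (e : M → ℕ) (ms : List M) (θ : OV M) :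
    OV.encode e (bxl ms θ) = nbx (ms.map e) (OV.encode e θ) := by
  induction ms with
  | nil => rfl
  | cons m ms ih => simp only [bxl, OV.encode, List.map_cons, nbx, ih]

/-- the algebra of pairs of codes -/
def cAlg (ns1 ns2 : List ℕ) (t1 t2 : ℕ → ℕ) (f1 f2 : ℕ → Bool) : Alg (ℕ × ℕ) where
  ng p := (Nat.pair 1 p.1, Nat.pair 1 p.2)
  an p q := (Nat.pair 2 (Nat.pair p.1 q.1), Nat.pair 2 (Nat.pair p.2 q.2))
  ex p := (Nat.pair 3 p.1, Nat.pair 3 p.2)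
  bx p := (nbx ns1 p.1, nbx ns2 p.2)
  tp := (ntop, ntop)
  T c := (t1 c, t2 c)
  ok p := !f1 (Nat.pair 1 p.1) && !f2 (Nat.pair 1 p.2)

theorem cAlg_computable (ns1 ns2 : List ℕ) {t1 t2 : ℕ → ℕ} {f1 f2 : ℕ → Bool}
    (ht1 : Primrec t1) (ht2 : Primrec t2) (hf1 : Computable f1) (hf2 : Computable f2) :
    Computable (cAlg ns1 ns2 t1 t2 f1 f2).Th := by
  have k : ∀ c, Primrec (fun x => Nat.pair c x) := fun c =>
    Primrec₂.natPair.comp (Primrec.const c) Primrec.id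
  refine Th_computable _ ?_ ?_ ?_ ?_ ?_ ?_
  · exact ((k 1).comp Primrec.fst).pair ((k 1).comp Primrec.snd)
  · exact ((k 2).comp (Primrec₂.natPair.comp (Primrec.fst.comp Primrec.fst)
      (Primrec.fst.comp Primrec.snd))).pair ((k 2).comp (Primrec₂.natPair.comp
      (Primrec.snd.comp Primrec.fst) (Primrec.snd.comp Primrec.snd)))
  · exact ((k 3).comp Primrec.fst).pair ((k 3).comp Primrec.snd)
  · exact ((nbx_primrec ns1).comp Primrec.fst).pair ((nbx_primrec ns2).comp Primrec.snd)
  · exact ht1.pair ht2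
  · exact Primrec.and.to_comp.comp
      (Primrec.not.to_comp.comp (hf1.comp ((k 1).comp Primrec.fst).to_comp))
      (Primrec.not.to_comp.comp (hf2.comp ((k 1).comp Primrec.snd).to_comp))

theorem exists_all (M : Type) [Finite M] : ∃ ms : List M, ∀ m, m ∈ ms := by
  have := Fintype.ofFinite M
  exact ⟨Finset.univ.toList, fun m => by simp⟩

end final

/-- Transfer of decidability under fusion of one-variable
modal logics that are `d`-complete for classes of frames closed under disjoint
unions.  Decidability is taken w.r.t. the fixed Gödel numbering `OV.encode`,
relative to injective numberings of the (disjoint) modal signatures. -/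
theorem fusion_decidable {M1 M2 : Type} [Finite M1] [Finite M2] (d : DSem)
    (e1 : M1 → ℕ) (e2 : M2 → ℕ)
    (he1 : Function.Injective e1) (he2 : Function.Injective e2)
    (C1 : Set (KFrame M1)) (C2 : Set (KFrame M2))
    (hC1 : C1.Nonempty) (hC2 : C2.Nonempty)
    (hdu1 : ClosedDU C1) (hdu2 : ClosedDU C2)
    (L1 : Set (OV M1)) (L2 : Set (OV M2))
    (hL1 : IsOVLogic L1) (hL2 : IsOVLogic L2)
    (hc1 : DComplete d L1 C1) (hc2 : DComplete d L2 C2)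
    (hd1 : DecidableLogic e1 L1) (hd2 : DecidableLogic e2 L2) :
    DecidableLogic (Sum.elim (fun m => 2 * e1 m) (fun m => 2 * e2 m + 1))
      (fusion L1 L2) := by
  have he : Function.Injective (eS e1 e2) := eS_inj he1 he2
  obtain ⟨ms1, hm1⟩ := exists_all M1
  obtain ⟨ms2, hm2⟩ := exists_all M2
  obtain ⟨ms, hm⟩ := exists_all (M1 ⊕ M2)
  obtain ⟨f1, hf1, hf1e⟩ := ComputablePred.computable_iff.1 hd1
  obtain ⟨f2, hf2, hf2e⟩ := ComputablePred.computable_iff.1 hd2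
  have g1 : ∀ ψ : OV M1, f1 (OV.encode e1 ψ) = true ↔ ψ ∈ L1 := by
    intro ψ
    have := congrFun hf1e (OV.encode e1 ψ)
    rw [← this]
    constructor
    · rintro ⟨χ, hχ, h⟩; rwa [← encode_inj e1 he1 h]
    · exact fun h => ⟨ψ, h, rfl⟩
  have g2 : ∀ ψ : OV M2, f2 (OV.encode e2 ψ) = true ↔ ψ ∈ L2 := by
    intro ψ
    have := congrFun hf2e (OV.encode e2 ψ)
    rw [← this]
    constructor
    · rintro ⟨χ, hχ, h⟩; rwa [← encode_inj e2 he2 h]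
    · exact fun h => ⟨ψ, h, rfl⟩
  let e := eS e1 e2
  let s1 : ℕ → Option ℕ := fun c => (decO e c).map (fun ψ => OV.encode e1 (tr1 (OV.encode e) ψ))
  let s2 : ℕ → Option ℕ := fun c => (decO e c).map (fun ψ => OV.encode e2 (tr2 (OV.encode e) ψ))
  have hns : ∀ n, n ∈ ms.map e ↔ ∃ m, e m = n := fun n => by simp [hm]
  have hs1 : Primrec s1 := s_primrec1 he (ms.map e) hns
  have hs2 : Primrec s2 := s_primrec2 he (ms.map e) hns
  let t1 : ℕ → ℕ := fun c => (s1 c).getD (OV.encode e1 (tr1 (OV.encode e) (.atom 0)))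
  let t2 : ℕ → ℕ := fun c => (s2 c).getD (OV.encode e2 (tr2 (OV.encode e) (.atom 0)))
  have ht1 : Primrec t1 := Primrec.option_getD.comp hs1 (Primrec.const _)
  have ht2 : Primrec t2 := Primrec.option_getD.comp hs2 (Primrec.const _)
  let A := fAlg e ms1 ms2 L1 L2
  let B := cAlg (ms1.map e1) (ms2.map e2) t1 t2 f1 f2
  have hB : Computable B.Th := cAlg_computable _ _ ht1 ht2 hf1 hf2
  have T1e : ∀ c, OV.encode e1 (tr1 (OV.encode e) (dec e c)) = t1 c := by
    intro c
    simp only [t1, s1, dec]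
    cases decO e c <;> rfl
  have T2e : ∀ c, OV.encode e2 (tr2 (OV.encode e) (dec e c)) = t2 c := by
    intro c
    simp only [t2, s2, dec]
    cases decO e c <;> rfl
  have H : Alg.Hom A B (fun p => (OV.encode e1 p.1, OV.encode e2 p.2)) := by
    refine ⟨fun _ => rfl, fun _ _ => rfl, fun _ => rfl, ?_, rfl, ?_, ?_⟩
    · intro x; exact Prod.ext (encode_bxl e1 ms1 x.1) (encode_bxl e2 ms2 x.2)
    · intro c; exact Prod.ext (T1e c) (T2e c)
    · intro p
      have q1 := g1 (.neg p.1)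
      have q2 := g2 (.neg p.2)
      simp only [OV.encode] at q1 q2
      rw [Bool.eq_iff_iff]
      simp only [A, B, fAlg, cAlg, decide_eq_true_eq, Bool.and_eq_true, Bool.not_eq_true', ← q1, ← q2,
        Bool.not_eq_true]
  have hTh : ∀ l, B.Th l = (OV.encode e1 (A.Th l).1, OV.encode e2 (A.Th l).2) := fun l =>
    (Alg.Th_hom H l).symm
  let f : ℕ → Bool := fun n => (s1 n).isSome &&
    f1 (Nat.pair 1 (Nat.pair 2 (Nat.pair (B.Th (n + 1)).1 (Nat.pair 1 (t1 n)))))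
  have hf : Computable f := by
    have k : ∀ c, Primrec (fun x => Nat.pair c x) := fun c =>
      Primrec₂.natPair.comp (Primrec.const c) Primrec.id
    refine Primrec.and.to_comp.comp (Primrec.option_isSome.comp hs1).to_comp (hf1.comp ?_)
    refine (k 1).to_comp.comp ((k 2).to_comp.comp (Primrec₂.natPair.to_comp.comp
      (Computable.fst.comp (hB.comp Computable.succ)) ((k 1).comp ht1).to_comp))
  refine ComputablePred.computable_iff.2 ⟨f, hf, ?_⟩
  funext n
  apply propext
  have hmain : ∀ φ : OV (M1 ⊕ M2), f (OV.encode e φ) = true ↔ φ ∈ fusion L1 L2 := by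
    intro φ
    have hs : s1 (OV.encode e φ) = some (OV.encode e1 (tr1 (OV.encode e) φ)) := by
      simp only [s1, (decO_iff he _ φ).2 rfl, Option.map_some, e]
    have h2 : f (OV.encode e φ) = true ↔
        OV.imp (A.Th (OV.encode e φ + 1)).1 (tr1 (OV.encode e) φ) ∈ L1 := by
      rw [← g1]
      simp only [f, t1, hs, hTh, Option.isSome_some, Bool.true_and, Option.getD_some, OV.imp,
        OV.encode]
    rw [h2]
    exact ⟨sound_dir e he ms1 ms2 L1 L2 _ φ,
      complete_dir d e he ms1 ms2 hm1 hm2 C1 C2 hC1 hC2 hdu1 hdu2 L1 L2 hc1 hc2 φ⟩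
  constructor
  · rintro ⟨φ, hφ, rfl⟩
    exact (hmain φ).2 hφ
  · intro h
    have hsome : (s1 n).isSome = true := (Bool.and_eq_true_iff.1 h).1
    rcases hdec : decO e n with _ | φ
    · simp [s1, hdec] at hsome
    · have hn := (decO_iff he _ _).1 hdec
      refine ⟨φ, (hmain φ).1 ?_, hn⟩
      rw [hn]; exact h

end OneVarML
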